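/- (Lemma 5.2, formula (beta−).) Uniformly over all λ ∈ C⁺ and all X ∈ a with x3 ≥ x2, one has V(λ)^{2k}·E_k(X,λ) ≍ ∫_{λ3}^{λ2} ∫_{λ2}^{λ1} [(ν1−ν2)(β_λ − β_X(ν1−λ2)(ν2−λ3)) / (1−β_X(ν1−ν2))^{k+1}] (λ1−ν1)(λ1−ν2) e^{(x3−x1)ν1 + (x2−x1)ν2} W_k(λ,ν) dν1 dν2. -/

import Mathlib

open Real MeasureTheory

/-- The rank-one Dunkl kernel `E_k^{rk1}(x,v)`. -/
noncomputable def Erk1 (k x v : ℝ) : ℝ :=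
  (Real.Gamma (k + 1/2) / (Real.sqrt Real.pi * Real.Gamma k)) *
    ∫ z in (-1 : ℝ)..1, Real.exp (z * x * v) * (1 - z) ^ (k - 1) * (1 + z) ^ k

/-- The normalized modified Bessel function `𝒥_a(y)`, for `a > -1/2`. -/
noncomputable def besselJ (a y : ℝ) : ℝ :=
  (Real.Gamma (a + 1) / (Real.sqrt Real.pi * Real.Gamma (a + 1/2))) *
    ∫ z in (-1 : ℝ)..1, Real.exp (y * z) * (1 - z ^ 2) ^ (a - 1/2)

/-- `W_k(λ,ν)`. -/
noncomputable def Wk (k l1 l2 l3 n1 n2 : ℝ) : ℝ :=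
  ((l1 - n1) * (l1 - n2) * (n1 - l2) * (l2 - n2) * (n1 - l3) * (n2 - l3)) ^ (k - 1)

/-- `V(λ) = (λ1-λ2)(λ1-λ3)(λ2-λ3)`. -/
def Vlam (l1 l2 l3 : ℝ) : ℝ := (l1 - l2) * (l1 - l3) * (l2 - l3)

/-- The `A₂` Dunkl kernel `E_k(X,λ)`, defined via the rank-one kernel formula. -/
noncomputable def EkA2 (k x1 x2 x3 l1 l2 l3 : ℝ) : ℝ :=
  (3 * Real.Gamma (3 * k) / (Vlam l1 l2 l3 ^ (2 * k) * Real.Gamma k ^ 2)) *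
    ∫ n2 in l3..l2, ∫ n1 in l2..l1,
      ((n1 - l2) * (l1 - n2) * Erk1 k ((x1 - x2) / 2) (n1 - n2)
        + (l1 - n1) * (l2 - n2) * Erk1 k (-(x1 - x2) / 2) (n1 - n2))
      * ((n1 - l3) * (n2 - l3)) * Real.exp ((x1 + x2 - 2 * x3) * (n1 + n2) / 2)
      * Wk k l1 l2 l3 n1 n2

lemma cubic_zero {a b c d T1 T2 T3 T4 : ℝ} (h12 : T1 < T2) (h23 : T2 < T3) (h34 : T3 < T4)
    (H1 : a * T1^3 + b * T1^2 + c * T1 + d = 0) (H2 : a * T2^3 + b * T2^2 + c * T2 + d = 0)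
    (H3 : a * T3^3 + b * T3^2 + c * T3 + d = 0) (H4 : a * T4^3 + b * T4^2 + c * T4 + d = 0) :
    a = 0 ∧ b = 0 ∧ c = 0 ∧ d = 0 := by
  have q12 : a * (T1^2 + T1*T2 + T2^2) + b * (T1 + T2) + c = 0 := by
    apply mul_left_cancel₀ (sub_ne_zero.2 h12.ne); linear_combination H1 - H2
  have q13 : a * (T1^2 + T1*T3 + T3^2) + b * (T1 + T3) + c = 0 := by
    apply mul_left_cancel₀ (sub_ne_zero.2 (h12.trans h23).ne); linear_combination H1 - H3
  have q14 : a * (T1^2 + T1*T4 + T4^2) + b * (T1 + T4) + c = 0 := by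
    apply mul_left_cancel₀ (sub_ne_zero.2 (h12.trans (h23.trans h34)).ne); linear_combination H1 - H4
  have r1 : a * (T1 + T2 + T3) + b = 0 := by
    apply mul_left_cancel₀ (sub_ne_zero.2 h23.ne); linear_combination q12 - q13
  have r2 : a * (T1 + T2 + T4) + b = 0 := by
    apply mul_left_cancel₀ (sub_ne_zero.2 (h23.trans h34).ne); linear_combination q12 - q14
  have ha : a = 0 := by
    apply mul_left_cancel₀ (sub_ne_zero.2 h34.ne); linear_combination r1 - r2
  subst ha
  have hb : b = 0 := by linarith
  subst hb
  have hc : c = 0 := by linarith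
  subst hc
  exact ⟨rfl, rfl, rfl, by linarith⟩

lemma big_aux (a b c d r M y : ℝ) (ha : 0 ≤ a) (hb : 0 ≤ b) (hc : 0 ≤ c) (hd : 0 ≤ d)
    (y1 : 1 ≤ y) (yr : r ≤ y) (hM : r * M ≤ y - 1) : r * (M + y) ≤ (a + y) * (b + y) * (c + y) * (d + y) := by
  have y0 : 0 ≤ y := by linarith
  have h1 : y * y * y * y ≤ (a + y) * (b + y) * (c + y) * (d + y) := by
    have k1 : y ≤ a + y := by linarith
    have k2 : y ≤ b + y := by linarith
    have k3 : y ≤ c + y := by linarith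
    have k4 : y ≤ d + y := by linarith
    gcongr
  have h5 : r * y ≤ y * y := by gcongr
  have h6 : 0 ≤ y * (y - 1) := mul_nonneg y0 (by linarith)
  have h8 : 2 * (y * y) ≤ y * y * y * y + 1 := by linarith [sq_nonneg (y*y - 1)]
  linarith

set_option maxHeartbeats 1000000 in
lemma roots_exist {D1 D2 D3 D4 r v0 : ℝ} (h2 : 0 ≤ D2) (h4 : 0 ≤ D4) (h21 : D2 < D1) (h23 : D2 < D3)
    (h41 : D4 < D1) (h43 : D4 < D3) (hr : 0 < r) (a2 : D2 < v0) (a4 : D4 < v0) (a1 : v0 < D1)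
    (a3 : v0 < D3) (hF : r * v0 < (D1 - v0) * (D2 - v0) * (D3 - v0) * (D4 - v0)) :
    ∃ T1 T2 T3 T4 : ℝ, 0 ≤ T1 ∧ T1 < T2 ∧ T2 < T3 ∧ T3 < T4 ∧
      ∀ v, (D1 - v) * (D2 - v) * (D3 - v) * (D4 - v) - r * v
        = (T1 - v) * (T2 - v) * (T3 - v) * (T4 - v) := by
  set F : ℝ → ℝ := fun v => (D1 - v) * (D2 - v) * (D3 - v) * (D4 - v) - r * v with hFd
  have hc : Continuous F := by fun_prop
  have hv0 : 0 < F v0 := by simp only [hFd]; linarith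
  have FD1 : F D1 = -(r * D1) := by simp only [hFd]; ring
  have FD2 : F D2 = -(r * D2) := by simp only [hFd]; ring
  have FD3 : F D3 = -(r * D3) := by simp only [hFd]; ring
  have FD4 : F D4 = -(r * D4) := by simp only [hFd]; ring
  have rD1 : 0 < r * D1 := mul_pos hr (by linarith)
  have rD3 : 0 < r * D3 := mul_pos hr (by linarith)
  have rD2 : 0 ≤ r * D2 := mul_nonneg hr.le h2
  have rD4 : 0 ≤ r * D4 := mul_nonneg hr.le h4
  -- first root
  have A1 : ∃ T1, 0 ≤ T1 ∧ T1 ≤ min D2 D4 ∧ F T1 = 0 := by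
    have h0 : 0 ≤ F 0 := by
      have : 0 ≤ D1 * D2 * D3 * D4 := by
        have : 0 ≤ D1 := by linarith
        have : 0 ≤ D3 := by linarith
        positivity
      simp only [hFd]; linarith
    have h1 : F (min D2 D4) ≤ 0 := by
      rcases min_choice D2 D4 with h | h <;> rw [h] <;> linarith
    have hm : (0:ℝ) ≤ min D2 D4 := le_min h2 h4
    obtain ⟨t, ht, hft⟩ := intermediate_value_Icc' hm hc.continuousOn ⟨h1, h0⟩
    exact ⟨t, ht.1, ht.2, hft⟩
  -- negative point
  have A2 : ∃ w, max D2 D4 ≤ w ∧ w < v0 ∧ F w < 0 := by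
    have hm : (0:ℝ) ≤ max D2 D4 := le_max_of_le_left h2
    rcases hm.lt_or_eq with h | h
    · refine ⟨max D2 D4, le_rfl, max_lt a2 a4, ?_⟩
      rcases max_choice D2 D4 with h' | h' <;> rw [h'] at h ⊢ <;> have := mul_pos hr h <;> linarith
    · have e2 : D2 = 0 := le_antisymm (h ▸ le_max_left _ _) h2
      have e4 : D4 = 0 := le_antisymm (h ▸ le_max_right _ _) h4
      rw [← h]
      subst e2 e4
      have hp : 0 < D1 * D3 := by nlinarith
      refine ⟨min (v0/2) (r / (2 * (D1 * D3))), by positivity, ?_, ?_⟩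
      · exact (min_le_left _ _).trans_lt (by linarith)
      · set w := min (v0/2) (r / (2 * (D1 * D3))) with hw
        have w0 : 0 < w := by positivity
        have w1 : w ≤ v0/2 := min_le_left _ _
        have w2 : w * (2 * (D1 * D3)) ≤ r := by
          rw [← le_div_iff₀ (by positivity)]; exact min_le_right _ _
        have : (D1 - w) * (D3 - w) ≤ D1 * D3 := by
          have : 0 ≤ w * (D1 - w) := mul_nonneg w0.le (by linarith)
          nlinarith [mul_pos w0 h23]
        have h3 : w * ((D1 - w) * (D3 - w)) < r := by nlinarith
        have e : F w = w * (w * ((D1 - w) * (D3 - w)) - r) := by simp only [hFd]; ring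
        rw [e]
        exact mul_neg_of_pos_of_neg w0 (by linarith)
  obtain ⟨T1, t10, t1m, f1⟩ := A1
  obtain ⟨w, w1, w2, fw⟩ := A2
  obtain ⟨T2, t2, f2⟩ := intermediate_value_Icc w2.le hc.continuousOn
    (show (0:ℝ) ∈ Set.Icc (F w) (F v0) from ⟨fw.le, hv0.le⟩)
  have B3 : F (min D1 D3) < 0 := by
    rcases min_choice D1 D3 with h' | h' <;> rw [h'] <;> linarith
  have B4 : F (max D1 D3) < 0 := by
    rcases max_choice D1 D3 with h' | h' <;> rw [h'] <;> linarith
  obtain ⟨T3, t3, f3⟩ := intermediate_value_Icc' (le_min a1.le a3.le) hc.continuousOn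
    (show (0:ℝ) ∈ Set.Icc (F (min D1 D3)) (F v0) from ⟨B3.le, hv0.le⟩)
  set M := max D1 D3 with hM
  have m1 : D1 ≤ M := le_max_left _ _
  have m3 : D3 ≤ M := le_max_right _ _
  have B5 : 0 ≤ F (M + 1 + r * (M + 1)) := by
    obtain ⟨y, hy⟩ : ∃ y, y = 1 + r * (M + 1) := ⟨_, rfl⟩
    have e : F (M + 1 + r * (M + 1)) = (M - D1 + y) * (M - D2 + y) * (M - D3 + y) * (M - D4 + y) - r * (M + y) := by
      simp only [hFd, hy]; ring
    rw [e]
    have hM0 : 0 < M := by linarith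
    have y1 : 1 ≤ y := by have := mul_pos hr hM0; linarith
    have yr : r ≤ y := by have := mul_pos hr hM0; linarith
    have h := big_aux (M - D1) (M - D2) (M - D3) (M - D4) r M y (by linarith) (by linarith)
      (by linarith) (by linarith) y1 yr (by linarith)
    linarith
  obtain ⟨T4, t4, f4⟩ := intermediate_value_Icc (show M ≤ M + 1 + r * (M + 1) by have := mul_pos hr (show 0 < M + 1 by linarith); linarith) hc.continuousOn
    (show (0:ℝ) ∈ Set.Icc (F M) (F (M + 1 + r * (M + 1))) from ⟨B4.le, B5⟩)
  have o12 : T1 < T2 := by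
    have : w ≠ T2 := by rintro rfl; linarith
    have h1 : w < T2 := lt_of_le_of_ne t2.1 this
    have := min_le_left D2 D4
    have := le_max_left D2 D4
    linarith
  have o23 : T2 < T3 := by
    have : T2 ≠ v0 := by rintro rfl; linarith
    have h1 : T2 < v0 := lt_of_le_of_ne t2.2 this
    linarith [t3.1]
  have o34 : T3 < T4 := by
    have : T3 ≠ min D1 D3 := by rintro h; rw [h] at f3; linarith
    have h1 : T3 < min D1 D3 := lt_of_le_of_ne t3.2 this
    have := min_le_left D1 D3
    linarith [t4.1]
  refine ⟨T1, T2, T3, T4, t10, o12, o23, o34, ?_⟩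
  obtain ⟨ca, cb, cc, cd⟩ := cubic_zero (a := (T1+T2+T3+T4) - (D1+D2+D3+D4))
    (b := (D1*D2+D1*D3+D1*D4+D2*D3+D2*D4+D3*D4) - (T1*T2+T1*T3+T1*T4+T2*T3+T2*T4+T3*T4))
    (c := (T1*T2*T3+T1*T2*T4+T1*T3*T4+T2*T3*T4) - (D1*D2*D3+D1*D2*D4+D1*D3*D4+D2*D3*D4) - r)
    (d := D1*D2*D3*D4 - T1*T2*T3*T4) o12 o23 o34
    (by simp only [hFd] at f1; linear_combination f1) (by simp only [hFd] at f2; linear_combination f2)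
    (by simp only [hFd] at f3; linear_combination f3) (by simp only [hFd] at f4; linear_combination f4)
  intro v
  linear_combination ca * v^3 + cb * v^2 + cc * v + cd

set_option maxHeartbeats 1000000 in
/-- location of the D's relative to the T's -/
lemma roots_loc {D1 D2 D3 D4 r T1 T2 T3 T4 : ℝ} (h2 : 0 ≤ D2) (h4 : 0 ≤ D4) (h21 : D2 < D1) (h23 : D2 < D3)
    (h41 : D4 < D1) (h43 : D4 < D3) (hr : 0 < r) (t1 : 0 ≤ T1) (t12 : T1 ≤ T2) (t23 : T2 < T3) (t34 : T3 ≤ T4)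
    (H : ∀ v, (D1 - v) * (D2 - v) * (D3 - v) * (D4 - v) - r * v
        = (T1 - v) * (T2 - v) * (T3 - v) * (T4 - v)) :
    (T1 ≤ D2 ∧ D2 ≤ T2) ∧ (T1 ≤ D4 ∧ D4 ≤ T2) ∧ (T3 ≤ D1 ∧ D1 ≤ T4) ∧ (T3 ≤ D3 ∧ D3 ≤ T4) := by
  have key : ∀ d, 0 ≤ d → (T1 - d) * (T2 - d) * (T3 - d) * (T4 - d) = - (r * d) →
      (T1 ≤ d ∧ d ≤ T2) ∨ (T3 ≤ d ∧ d ≤ T4) := by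
    intro d hd hh
    have hle : (T1 - d) * (T2 - d) * (T3 - d) * (T4 - d) ≤ 0 := by
      rw [hh]; have := mul_nonneg hr.le hd; linarith
    by_contra hcon
    push Not at hcon
    obtain ⟨c1, c2⟩ := hcon
    have : 0 < (T1 - d) * (T2 - d) * (T3 - d) * (T4 - d) := by
      by_cases hx : d < T1
      · have : 0 < T1 - d := by linarith
        have : 0 < T2 - d := by linarith
        have : 0 < T3 - d := by linarith
        have : 0 < T4 - d := by linarith
        positivity
      · have hx2 := c1 (not_lt.1 hx)
        by_cases hy : d < T3
        · have p1 : T1 - d < 0 := by linarith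
          have p2 : T2 - d < 0 := by linarith
          have p3 : 0 < T3 - d := by linarith
          have p4 : 0 < T4 - d := by linarith
          have := mul_pos_of_neg_of_neg p1 p2
          positivity
        · have hz := c2 (not_lt.1 hy)
          have p1 : T1 - d < 0 := by linarith
          have p2 : T2 - d < 0 := by linarith
          have p3 : T3 - d < 0 := by linarith
          have p4 : T4 - d < 0 := by linarith
          have := mul_pos_of_neg_of_neg p1 p2
          have := mul_pos_of_neg_of_neg p3 p4
          rw [mul_assoc]
          positivity
    linarith
  have k1 := key D1 (by linarith) (by rw [← H]; ring)
  have k2 := key D2 h2 (by rw [← H]; ring)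
  have k3 := key D3 (by linarith) (by rw [← H]; ring)
  have k4 := key D4 h4 (by rw [← H]; ring)
  have F2 : (D1 - T2) * (D2 - T2) * (D3 - T2) * (D4 - T2) = r * T2 := by linear_combination H T2
  have F3 : (D1 - T3) * (D2 - T3) * (D3 - T3) * (D4 - T3) = r * T3 := by linear_combination H T3
  have T3p : 0 < T3 := by linarith
  have rT3 : 0 < r * T3 := mul_pos hr T3p
  -- general: three lower
  have three : ∀ A B C E : ℝ, 0 ≤ A → A ≤ T2 → B ≤ T2 → C ≤ T2 → ((T1 ≤ E ∧ E ≤ T2) ∨ (T3 ≤ E ∧ E ≤ T4)) →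
      0 < C → 0 ≤ B → 0 ≤ E → 
      (A - T2) * (B - T2) * (C - T2) * (E - T2) = r * T2 → (A - T3) * (B - T3) * (C - T3) * (E - T3) = r * T3 → False := by
    intro A B C E hA0 hA hB hC hE hC0 hB0 hE0 g2 g3
    rcases hE with hE | hE
    · have T2p : 0 < T2 := by linarith
      have q : 0 < (T2 - A) * (T2 - B) * (T2 - C) * (T2 - E) := by
        have := mul_pos hr T2p
        linarith
      have a0 : 0 ≤ T2 - A := by linarith
      have b0 : 0 ≤ T2 - B := by linarith
      have c0 : 0 ≤ T2 - C := by linarith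
      have e0 : 0 ≤ T2 - E := by linarith
      have hlt : (T2 - B) * (T2 - C) * (T2 - E) < (T3 - B) * (T3 - C) * (T3 - E) := by
        have : (T2 - B) * (T2 - C) * (T2 - E) ≤ (T2 - B) * (T2 - C) * (T3 - E) := by gcongr
        have h2 : (T2 - B) * (T2 - C) * (T3 - E) ≤ (T2 - B) * (T3 - C) * (T3 - E) := by
          have : 0 ≤ T3 - E := by linarith
          gcongr
        have h3 : (T2 - B) * (T3 - C) * (T3 - E) < (T3 - B) * (T3 - C) * (T3 - E) := by
          have : 0 < T3 - E := by linarith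
          have : 0 < T3 - C := by linarith
          gcongr
        linarith
      have hA1 : T3 * (T2 - A) ≤ T2 * (T3 - A) := by nlinarith
      have hA2 : 0 < T2 - A := by
        rcases a0.lt_or_eq with h | h
        · exact h
        · rw [← h] at q; simp at q
      have z1 : T3 * (T2 - A) * ((T2 - B) * (T2 - C) * (T2 - E)) < T3 * (T2 - A) * ((T3 - B) * (T3 - C) * (T3 - E)) :=
        mul_lt_mul_of_pos_left hlt (mul_pos T3p hA2)
      have z2 : T3 * (T2 - A) * ((T3 - B) * (T3 - C) * (T3 - E)) ≤ T2 * (T3 - A) * ((T3 - B) * (T3 - C) * (T3 - E)) := by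
        apply mul_le_mul_of_nonneg_right hA1
        have : 0 < T3 - E := by linarith
        have : 0 < T3 - C := by linarith
        have : 0 < T3 - B := by linarith
        positivity
      have z3 : T3 * (T2 - A) * ((T2 - B) * (T2 - C) * (T2 - E)) = T3 * (r * T2) := by linear_combination T3 * g2
      have z4 : T2 * (T3 - A) * ((T3 - B) * (T3 - C) * (T3 - E)) = T2 * (r * T3) := by linear_combination T2 * g3
      linarith
    · have : 0 < T3 - A := by linarith
      have : 0 < T3 - B := by linarith
      have : 0 < T3 - C := by linarith
      have : 0 ≤ E - T3 := by linarith
      have : 0 ≤ (T3 - A) * (T3 - B) * (T3 - C) * (E - T3) := by positivity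
      linarith
  have U1 : T3 ≤ D1 ∧ D1 ≤ T4 := by
    rcases k1 with k1 | k1
    · exfalso
      exact three D2 D4 D1 D3 h2 (by linarith) (by linarith) k1.2 k3 (by linarith) h4 (by linarith)
        (by linear_combination F2) (by linear_combination F3)
    · exact k1
  have U3 : T3 ≤ D3 ∧ D3 ≤ T4 := by
    rcases k3 with k3 | k3
    · exfalso
      exact three D2 D4 D3 D1 h2 (by linarith) (by linarith) k3.2 k1 (by linarith) h4 (by linarith)
        (by linear_combination F2) (by linear_combination F3)
    · exact k3
  have low : ∀ A B : ℝ, T3 ≤ A → 0 ≤ B → ((T1 ≤ B ∧ B ≤ T2) ∨ (T3 ≤ B ∧ B ≤ T4)) →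
     (A - T2) * (B - T2) * ((D1 - T2) * (D3 - T2)) = r * T2 → 
     (A - T3) * (B - T3) * ((D1 - T3) * (D3 - T3)) = r * T3 → False := by
    intro A B hA hB hB' g2 g3
    rcases hB' with h | h
    · have : 0 ≤ (D1 - T3) := by linarith
      have : 0 ≤ (D3 - T3) := by linarith
      have : 0 ≤ (A - T3) := by linarith
      have : 0 ≤ (T3 - B) := by linarith
      have : 0 ≤ (A - T3) * (T3 - B) * ((D1 - T3) * (D3 - T3)) := by positivity
      linarith
    · have : 0 ≤ (D1 - T3) := by linarith
      have : 0 ≤ (D3 - T3) := by linarith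
      have : 0 ≤ (A - T3) := by linarith
      have : 0 ≤ (B - T3) := by linarith
      have : (A - T3) * (B - T3) * ((D1 - T3) * (D3 - T3)) ≤ (A - T2) * (B - T2) * ((D1 - T2) * (D3 - T2)) := by
        have : 0 ≤ A - T2 := by linarith
        have : 0 ≤ B - T2 := by linarith
        have : 0 ≤ D1 - T2 := by linarith
        gcongr
      have := mul_lt_mul_of_pos_left t23 hr
      linarith
  refine ⟨?_, ?_, U1, U3⟩
  · rcases k2 with k2 | k2
    · exact k2
    · exact (low D2 D4 k2.1 h4 k4 (by linear_combination F2) (by linear_combination F3)).elim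
  · rcases k4 with k4 | k4
    · exact k4
    · exact (low D4 D2 k4.1 h2 k2 (by linear_combination F2) (by linear_combination F3)).elim

noncomputable def Rf (e1 e2 e3 e4 τ : ℝ) : ℝ :=
  (e1^2 - τ^2) * (τ^2 - e2^2) * (e3^2 - τ^2) * (τ^2 - e4^2) / τ^2

noncomputable def Kf (e1 e2 e3 e4 τ : ℝ) : ℝ :=
  ((e2 - e1 + e4) * τ^2 - e4 * e1 * e2) * (e3^2 - τ^2) / τ^2

def Iset (e1 e2 e3 e4 : ℝ) : Set ℝ := Set.Ioo (max |e2| |e4|) (min (-e1) e3)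

def CC (e1 e2 e3 e4 : ℝ) : Prop := |e2| < -e1 ∧ |e2| < e3 ∧ |e4| < -e1 ∧ |e4| < e3

lemma Iset_pos {e1 e2 e3 e4 τ : ℝ} (h : τ ∈ Iset e1 e2 e3 e4) :
    0 < τ ∧ |e2| < τ ∧ |e4| < τ ∧ τ < -e1 ∧ τ < e3 := by
  obtain ⟨h1, h2⟩ := h
  have a := (max_lt_iff.1 h1)
  have b := (lt_min_iff.1 h2)
  exact ⟨lt_of_le_of_lt (abs_nonneg _) a.1, a.1, a.2, b.1, b.2⟩

lemma CC_of_mem {e1 e2 e3 e4 τ : ℝ} (h : τ ∈ Iset e1 e2 e3 e4) : CC e1 e2 e3 e4 := by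
  obtain ⟨h0, h2, h4, h1, h3⟩ := Iset_pos h
  exact ⟨by linarith, by linarith, by linarith, by linarith⟩

lemma Iset_sq {e1 e2 e3 e4 τ : ℝ} (h : τ ∈ Iset e1 e2 e3 e4) :
    e2^2 < τ^2 ∧ e4^2 < τ^2 ∧ τ^2 < e1^2 ∧ τ^2 < e3^2 := by
  obtain ⟨h0, h2, h4, h1, h3⟩ := Iset_pos h
  refine ⟨sq_lt_sq.2 ?_, sq_lt_sq.2 ?_, sq_lt_sq.2 ?_, sq_lt_sq.2 ?_⟩
  · rwa [abs_of_pos h0]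
  · rwa [abs_of_pos h0]
  · rw [abs_of_pos h0, abs_of_neg (by linarith)]; exact h1
  · rw [abs_of_pos h0, abs_of_pos (by linarith)]; exact h3

lemma CC_sq {e1 e2 e3 e4 : ℝ} (h : CC e1 e2 e3 e4) :
    e2^2 < e1^2 ∧ e2^2 < e3^2 ∧ e4^2 < e1^2 ∧ e4^2 < e3^2 := by
  obtain ⟨h1, h2, h3, h4⟩ := h
  have a2 := abs_nonneg e2
  have b : |e1| = - e1 := abs_of_neg (by linarith)
  have c : |e3| = e3 := abs_of_pos (by linarith)
  refine ⟨sq_lt_sq.2 ?_, sq_lt_sq.2 ?_, sq_lt_sq.2 ?_, sq_lt_sq.2 ?_⟩ <;> simp only [b, c] <;> assumption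

lemma Kf_nonneg {e1 e2 e3 e4 τ : ℝ} (h : τ ∈ Iset e1 e2 e3 e4) : 0 ≤ Kf e1 e2 e3 e4 τ := by
  obtain ⟨h0, h2, h4, h1, h3⟩ := Iset_pos h
  obtain ⟨s2, s4, s1, s3⟩ := Iset_sq h
  rw [abs_lt] at h2 h4
  apply div_nonneg _ (sq_nonneg _)
  apply mul_nonneg _ (by linarith)
  -- A (ζ-ν2) + B(ν1-ζ)
  have e : (e2 - e1 + e4) * τ^2 - e4 * e1 * e2
      = ((τ + e2) * (τ - e1) * (τ + e4) + (-e1 - τ) * (τ - e2) * (τ - e4)) / 2 := by ring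
  rw [e]
  have : 0 ≤ (τ + e2) := by linarith
  have : 0 ≤ (τ - e1) := by linarith
  have : 0 ≤ (τ + e4) := by linarith
  have : 0 ≤ (-e1 - τ) := by linarith
  have : 0 ≤ (τ - e2) := by linarith
  have : 0 ≤ (τ - e4) := by linarith
  positivity

lemma Rf_pos {e1 e2 e3 e4 τ : ℝ} (h : τ ∈ Iset e1 e2 e3 e4) : 0 < Rf e1 e2 e3 e4 τ := by
  obtain ⟨h0, -⟩ := Iset_pos h
  obtain ⟨s2, s4, s1, s3⟩ := Iset_sq h
  have := sub_pos.2 s2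
  have := sub_pos.2 s4
  have := sub_pos.2 s1
  have := sub_pos.2 s3
  unfold Rf; positivity

lemma level {e1 e2 e3 e4 r t1 t2 t3 t4 : ℝ} (hC : CC e1 e2 e3 e4) (hr : 0 < r)
    (h12 : t1^2 ≤ t2^2) (t20 : 0 < t2) (h23 : t2 < t3) (h34 : t3 ≤ t4)
    (H : ∀ v, (e1^2 - v) * (e2^2 - v) * (e3^2 - v) * (e4^2 - v) - r * v
        = (t1^2 - v) * (t2^2 - v) * (t3^2 - v) * (t4^2 - v)) :
    Iset e1 e2 e3 e4 ∩ {τ | r < Rf e1 e2 e3 e4 τ} = Set.Ioo t2 t3 := by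
  obtain ⟨c1, c2, c3, c4⟩ := CC_sq hC
  obtain ⟨q2, q4, q1, q3⟩ := roots_loc (sq_nonneg e2) (sq_nonneg e4) c1 c2 c3 c4 hr (sq_nonneg t1) h12
    (by gcongr) (by gcongr; linarith) H
  have key : ∀ τ, 0 < τ → (r < Rf e1 e2 e3 e4 τ ↔ 0 < (t1^2 - τ^2) * (t2^2 - τ^2) * (t3^2 - τ^2) * (t4^2 - τ^2)) := by
    intro τ hτ
    have hτ2 : 0 < τ^2 := by positivity
    rw [← H, Rf, lt_div_iff₀ hτ2]
    constructor <;> intro h <;> linarith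
  obtain ⟨C1, C2, C3, C4⟩ := hC
  have ha2 := abs_nonneg e2
  ext τ
  constructor
  · rintro ⟨hI, hR⟩
    obtain ⟨s2, s4, s1, s3⟩ := Iset_sq hI
    obtain ⟨h0, -⟩ := Iset_pos hI
    rw [Set.mem_ofPred_eq, key τ h0] at hR
    have p1 : 0 < τ^2 - t1^2 := by linarith
    have p4 : 0 < t4^2 - τ^2 := by linarith
    have hR' : 0 < (τ^2 - t2^2) * (t3^2 - τ^2) := by
      by_contra hcon
      push Not at hcon
      have := mul_nonneg (mul_pos p1 p4).le (neg_nonneg.2 hcon)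
      linarith
    have : t2^2 < τ^2 := by
      by_contra hcon
      push Not at hcon
      have : τ^2 < t3^2 := lt_of_le_of_lt hcon (by gcongr)
      have := mul_nonneg (sub_nonneg.2 hcon) (sub_pos.2 this).le
      linarith
    have h3 : τ^2 < t3^2 := by
      by_contra hcon
      push Not at hcon
      have := mul_nonneg (sub_nonneg.2 hcon) (sub_pos.2 this).le
      linarith
    exact ⟨lt_of_pow_lt_pow_left₀ 2 h0.le this, lt_of_pow_lt_pow_left₀ 2 (by linarith) h3⟩
  · rintro ⟨h1, h2⟩
    have h0 : 0 < τ := t20.trans h1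
    have k1 : t2^2 < τ^2 := by gcongr
    have k2 : τ^2 < t3^2 := by gcongr
    refine ⟨⟨max_lt ?_ ?_, lt_min ?_ ?_⟩, ?_⟩
    · rw [← abs_of_pos h0]; exact sq_lt_sq.1 (by linarith)
    · rw [← abs_of_pos h0]; exact sq_lt_sq.1 (by linarith)
    · rw [← abs_of_pos h0, ← abs_of_neg (show e1 < 0 by linarith)]; exact sq_lt_sq.1 (by linarith)
    · rw [← abs_of_pos h0, ← abs_of_pos (show 0 < e3 by linarith)]; exact sq_lt_sq.1 (by linarith)
    · rw [Set.mem_ofPred_eq, key τ h0]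
      have p1 : 0 < τ^2 - t1^2 := by linarith
      have p2 : 0 < τ^2 - t2^2 := by linarith
      have p3 : 0 < t3^2 - τ^2 := by linarith
      have p4 : 0 < t4^2 - τ^2 := by linarith
      have := mul_pos (mul_pos (mul_pos p1 p2) p3) p4
      linarith

/-- from the polynomial identity to the coefficients -/
lemma coeffs {D1 D2 D3 D4 r T1 T2 T3 T4 : ℝ}
    (H : ∀ v, (D1 - v) * (D2 - v) * (D3 - v) * (D4 - v) - r * v
        = (T1 - v) * (T2 - v) * (T3 - v) * (T4 - v)) :
    (D1+D2+D3+D4 = T1+T2+T3+T4) ∧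
    (D1*D2+D1*D3+D1*D4+D2*D3+D2*D4+D3*D4 = T1*T2+T1*T3+T1*T4+T2*T3+T2*T4+T3*T4) ∧
    (D1*D2*D3+D1*D2*D4+D1*D3*D4+D2*D3*D4 + r = T1*T2*T3+T1*T2*T4+T1*T3*T4+T2*T3*T4) := by
  obtain ⟨ca, cb, cc, cd⟩ := cubic_zero (a := (T1+T2+T3+T4) - (D1+D2+D3+D4))
    (b := (D1*D2+D1*D3+D1*D4+D2*D3+D2*D4+D3*D4) - (T1*T2+T1*T3+T1*T4+T2*T3+T2*T4+T3*T4))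
    (c := (T1*T2*T3+T1*T2*T4+T1*T3*T4+T2*T3*T4) - (D1*D2*D3+D1*D2*D4+D1*D3*D4+D2*D3*D4) - r)
    (d := D1*D2*D3*D4 - T1*T2*T3*T4) (zero_lt_one) (one_lt_two) (show (2:ℝ) < 3 by norm_num)
    (by linear_combination H 0) (by linear_combination H 1)
    (by linear_combination H 2) (by linear_combination H 3)
  exact ⟨by linarith, by linarith, by linarith⟩

lemma reflect {e1 e2 e3 e4 r t1 t2 t3 t4 : ℝ}
    (H : ∀ v, (e1^2 - v) * (e2^2 - v) * (e3^2 - v) * (e4^2 - v) - r * v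
        = (t1^2 - v) * (t2^2 - v) * (t3^2 - v) * (t4^2 - v)) (hP : e1*e2*e3*e4 = t1*t2*t3*t4)
    {h g : ℝ} (hh : h = (e1+e2+e3+e4)/2) (hg : g = (t1+t2+t3+t4)/2) :
    (∀ v, ((h-e3)^2 - v) * ((h-e2)^2 - v) * ((h-e1)^2 - v) * ((h-e4)^2 - v) - r * v
        = ((g-t4)^2 - v) * ((g-t3)^2 - v) * ((g-t2)^2 - v) * ((g-t1)^2 - v)) ∧
    (h-e3)*(h-e2)*(h-e1)*(h-e4) = (g-t4)*(g-t3)*(g-t2)*(g-t1) := by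
  obtain ⟨A, B, C⟩ := coeffs H
  have s1 : ∀ x1 x2 x3 x4 f : ℝ, f = (x1+x2+x3+x4)/2 →
      (f-x1)^2+(f-x2)^2+(f-x3)^2+(f-x4)^2 = x1^2+x2^2+x3^2+x4^2 := by
    intro x1 x2 x3 x4 f hf; subst hf; ring
  have s2 : ∀ x1 x2 x3 x4 f : ℝ, f = (x1+x2+x3+x4)/2 →
      (f-x1)^2*(f-x2)^2+(f-x1)^2*(f-x3)^2+(f-x1)^2*(f-x4)^2+(f-x2)^2*(f-x3)^2+(f-x2)^2*(f-x4)^2+(f-x3)^2*(f-x4)^2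
       = 3/8*(x1^2+x2^2+x3^2+x4^2)^2 - 1/2*(x1^2*x2^2+x1^2*x3^2+x1^2*x4^2+x2^2*x3^2+x2^2*x4^2+x3^2*x4^2)
        + 3 * (x1*x2*x3*x4) := by
    intro x1 x2 x3 x4 f hf; subst hf; ring
  have s3 : ∀ x1 x2 x3 x4 f : ℝ, f = (x1+x2+x3+x4)/2 →
      (f-x1)*(f-x2)*(f-x3)*(f-x4)
       = -1/16*(x1^2+x2^2+x3^2+x4^2)^2 + 1/4*(x1^2*x2^2+x1^2*x3^2+x1^2*x4^2+x2^2*x3^2+x2^2*x4^2+x3^2*x4^2)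
        + 1/2 * (x1*x2*x3*x4) := by
    intro x1 x2 x3 x4 f hf; subst hf; ring
  have s4 : ∀ x1 x2 x3 x4 f : ℝ, f = (x1+x2+x3+x4)/2 →
      (f-x1)^2*(f-x2)^2*(f-x3)^2+(f-x1)^2*(f-x2)^2*(f-x4)^2+(f-x1)^2*(f-x3)^2*(f-x4)^2+(f-x2)^2*(f-x3)^2*(f-x4)^2
       = 1/16*(x1^2+x2^2+x3^2+x4^2)^3 - 1/4*(x1^2+x2^2+x3^2+x4^2)*(x1^2*x2^2+x1^2*x3^2+x1^2*x4^2+x2^2*x3^2+x2^2*x4^2+x3^2*x4^2)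
        + 1/2 * (x1^2+x2^2+x3^2+x4^2)*(x1*x2*x3*x4)
        + (x1^2*x2^2*x3^2+x1^2*x2^2*x4^2+x1^2*x3^2*x4^2+x2^2*x3^2*x4^2) := by
    intro x1 x2 x3 x4 f hf; subst hf; ring
  have S1 := s1 e1 e2 e3 e4 h hh
  have S2 := s2 e1 e2 e3 e4 h hh
  have S3 := s3 e1 e2 e3 e4 h hh
  have S4 := s4 e1 e2 e3 e4 h hh
  rw [A, ← s1 t1 t2 t3 t4 g hg] at S1
  rw [A, B, hP, ← s2 t1 t2 t3 t4 g hg] at S2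
  rw [A, B, hP, ← s3 t1 t2 t3 t4 g hg] at S3
  rw [A, B, hP, show ∀ a b c d : ℝ, a - b + c + d = a - b + c + (d + r) - r by intros; ring, C, ← s4 t1 t2 t3 t4 g hg] at S4
  generalize h - e1 = a1 at *
  generalize h - e2 = a2 at *
  generalize h - e3 = a3 at *
  generalize h - e4 = a4 at *
  generalize g - t1 = b1 at *
  generalize g - t2 = b2 at *
  generalize g - t3 = b3 at *
  generalize g - t4 = b4 at *
  refine ⟨fun v => ?_, by linear_combination S3⟩
  linear_combination (-v^3) * S1 + v^2 * S2 - v * S4 + (a1*a2*a3*a4 + b1*b2*b3*b4) * S3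

lemma Kident {e1 e2 e3 e4 t1 t2 t3 t4 h g : ℝ} (hh : h = (e1+e2+e3+e4)/2) (hg : g = (t1+t2+t3+t4)/2)
    (A : e1^2+e2^2+e3^2+e4^2 = t1^2+t2^2+t3^2+t4^2) :
    (e2-e1+e4) * e3^2 + e1*e2*e4 - e3*(t1*t4) - (e2-e1+e4)*(t2^2+t2*t3+t3^2)/3
    = ((h-e2)-(h-e3)+(h-e4)) * (h-e1)^2 + (h-e3)*(h-e2)*(h-e4) - (h-e1)*((g-t4)*(g-t1)) 
      - ((h-e2)-(h-e3)+(h-e4))*((g-t3)^2+(g-t3)*(g-t2)+(g-t2)^2)/3 := by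
  subst hh hg
  linear_combination (-e1+e2-e3+e4)/4 * A

lemma Kint {e1 e2 e3 e4 a b t1 t4 : ℝ} (ha : 0 < a) (hab : a < b) (hP : e1*e2*e3*e4 = t1*a*b*t4)
   (hsub : Set.Ioo a b ⊆ Iset e1 e2 e3 e4) :
    ∫⁻ τ in Set.Ioo a b, ENNReal.ofReal (Kf e1 e2 e3 e4 τ) = 
    ENNReal.ofReal ((b-a) * ((e2-e1+e4) * e3^2 + e1*e2*e4 - e3*(t1*t4) - (e2-e1+e4)*(a^2+a*b+b^2)/3)) := by
  have hcont : ContinuousOn (Kf e1 e2 e3 e4) (Set.Icc a b) := by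
    unfold Kf
    apply ContinuousOn.div (by fun_prop) (by fun_prop)
    intro x hx
    have : 0 < x := ha.trans_le hx.1
    positivity
  have hint : IntegrableOn (Kf e1 e2 e3 e4) (Set.Ioo a b) :=
    (hcont.integrableOn_compact isCompact_Icc).mono_set Set.Ioo_subset_Icc_self
  rw [← ofReal_integral_eq_lintegral_ofReal hint]
  · congr 1
    rw [← integral_Ioc_eq_integral_Ioo, ← intervalIntegral.integral_of_le hab.le]
    have hd : ∀ x ∈ Set.uIcc a b, HasDerivAt (fun x : ℝ => (e2-e1+e4)*e3^2*x - (e2-e1+e4)*x^3/3 + e4*e1*e2*x + e4*e1*e2*e3^2 * x⁻¹)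
        (Kf e1 e2 e3 e4 x) x := by
      intro x hx
      rw [Set.uIcc_of_le hab.le] at hx
      have hx0 : x ≠ 0 := (ha.trans_le hx.1).ne'
      have := (((((hasDerivAt_id x).const_mul ((e2-e1+e4)*e3^2)).sub 
        (((hasDerivAt_pow 3 x).const_mul (e2-e1+e4)).div_const 3)).add
        ((hasDerivAt_id x).const_mul (e4*e1*e2))).add ((hasDerivAt_inv hx0).const_mul (e4*e1*e2*e3^2)))
      refine this.congr_deriv ?_
      unfold Kf
      field_simp
      push_cast
      ring
    rw [intervalIntegral.integral_eq_sub_of_hasDerivAt hd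
      (by apply ContinuousOn.intervalIntegrable; rwa [Set.uIcc_of_le hab.le])]
    have hb : 0 < b := ha.trans hab
    have e : e4*e1*e2*e3^2 * b⁻¹ - e4*e1*e2*e3^2 * a⁻¹ = - (e3 * (t1 * t4)) * (b - a) := by
      have : e4*e1*e2*e3^2 = e3 * (t1*a*b*t4) := by rw [← hP]; ring
      rw [this]; field_simp; ring
    linear_combination e
  · filter_upwards [ae_restrict_mem measurableSet_Ioo] with x hx
    exact Kf_nonneg (hsub hx)

lemma CC_refl {e1 e2 e3 e4 h : ℝ} (hh : h = (e1+e2+e3+e4)/2) (hC : CC e1 e2 e3 e4) :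
    CC (h-e3) (h-e2) (h-e1) (h-e4) := by
  obtain ⟨h1, h2, h3, h4⟩ := hC
  rw [abs_lt] at h1 h2 h3 h4
  unfold CC
  subst hh
  refine ⟨?_, ?_, ?_, ?_⟩ <;> rw [abs_lt] <;> constructor <;> linarith [h1.1, h1.2, h2.1, h2.2, h3.1, h3.2, h4.1, h4.2]

lemma measurable_Rf (e1 e2 e3 e4 : ℝ) : Measurable (Rf e1 e2 e3 e4) := by
  unfold Rf; fun_prop

lemma measurable_Kf (e1 e2 e3 e4 : ℝ) : Measurable (Kf e1 e2 e3 e4) := by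
  unfold Kf; fun_prop

lemma measurableSet_Iset (e1 e2 e3 e4 : ℝ) : MeasurableSet (Iset e1 e2 e3 e4) := measurableSet_Ioo

noncomputable def Me (e1 e2 e3 e4 : ℝ) : Measure ℝ :=
  ((volume.restrict (Iset e1 e2 e3 e4)).withDensity (fun τ => ENNReal.ofReal (Kf e1 e2 e3 e4 τ))).map (Rf e1 e2 e3 e4)

lemma Me_apply (e1 e2 e3 e4 : ℝ) {S : Set ℝ} (hS : MeasurableSet S) :
    Me e1 e2 e3 e4 S = ∫⁻ τ in Iset e1 e2 e3 e4 ∩ {τ | Rf e1 e2 e3 e4 τ ∈ S}, ENNReal.ofReal (Kf e1 e2 e3 e4 τ) := by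
  have hm := measurable_Rf e1 e2 e3 e4 hS
  rw [Me, Measure.map_apply (measurable_Rf _ _ _ _) hS, withDensity_apply _ hm, Measure.restrict_restrict hm,
    Set.inter_comm]
  rfl

lemma level_eq {e1 e2 e3 e4 h r : ℝ} (hh : h = (e1+e2+e3+e4)/2) (hr : 0 < r)
    (hne : (Iset e1 e2 e3 e4 ∩ {τ | r < Rf e1 e2 e3 e4 τ}).Nonempty) :
    Me e1 e2 e3 e4 (Set.Ioi r) = Me (h-e3) (h-e2) (h-e1) (h-e4) (Set.Ioi r) ∧
    (Iset (h-e3) (h-e2) (h-e1) (h-e4) ∩ {τ | r < Rf (h-e3) (h-e2) (h-e1) (h-e4) τ}).Nonempty := by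
  obtain ⟨τ0, hI, hR⟩ := hne
  have hC := CC_of_mem hI
  obtain ⟨c1, c2, c3, c4⟩ := CC_sq hC
  obtain ⟨s2, s4, s1, s3⟩ := Iset_sq hI
  obtain ⟨p0, -⟩ := Iset_pos hI
  obtain ⟨T1, T2, T3, T4, T0, T12, T23, T34, HT⟩ := roots_exist (sq_nonneg e2) (sq_nonneg e4) c1 c2 c3 c4 hr
    s2 s4 s1 s3 (by
      rw [Set.mem_ofPred_eq, Rf, lt_div_iff₀ (by positivity)] at hR
      linarith)
  have HP : e1^2*e2^2*e3^2*e4^2 = T1*T2*T3*T4 := by linear_combination HT 0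
  have T2p : 0 < T2 := by linarith
  have T3p : 0 < T3 := by linarith
  have T4p : 0 < T4 := by linarith
  obtain ⟨t1, t2, t3, t4, q1, q2, q3, q4, t2p, t3p, t4p, hP⟩ : ∃ t1 t2 t3 t4 : ℝ, t1^2 = T1 ∧ t2^2 = T2 ∧ t3^2 = T3 ∧ t4^2 = T4 ∧
      0 < t2 ∧ 0 < t3 ∧ 0 < t4 ∧ e1*e2*e3*e4 = t1*t2*t3*t4 := by
    have hs : (e1*e2*e3*e4)^2 = (√T1*√T2*√T3*√T4)^2 := by
      rw [mul_pow, mul_pow, mul_pow, mul_pow, mul_pow, mul_pow, sq_sqrt T0, sq_sqrt T2p.le, sq_sqrt T3p.le, sq_sqrt T4p.le, HP]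
    rcases sq_eq_sq_iff_eq_or_eq_neg.1 hs with hq | hq
    · exact ⟨√T1, √T2, √T3, √T4, sq_sqrt T0, sq_sqrt T2p.le, sq_sqrt T3p.le, sq_sqrt T4p.le,
        sqrt_pos.2 T2p, sqrt_pos.2 T3p, sqrt_pos.2 T4p, hq⟩
    · exact ⟨-√T1, √T2, √T3, √T4, by rw [neg_sq, sq_sqrt T0], sq_sqrt T2p.le, sq_sqrt T3p.le, sq_sqrt T4p.le,
        sqrt_pos.2 T2p, sqrt_pos.2 T3p, sqrt_pos.2 T4p, by rw [hq]; ring⟩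
  subst q1 q2 q3 q4
  obtain ⟨g, hg⟩ : ∃ g, g = (t1+t2+t3+t4)/2 := ⟨_, rfl⟩
  have o12 : |t1| < t2 := by rw [← abs_of_pos t2p]; exact sq_lt_sq.1 T12
  have o23 : t2 < t3 := lt_of_pow_lt_pow_left₀ 2 t3p.le T23
  have o34 : t3 < t4 := lt_of_pow_lt_pow_left₀ 2 t4p.le T34
  rw [abs_lt] at o12
  obtain ⟨H', hP'⟩ := reflect HT hP hh hg
  have L1 := level hC hr T12.le t2p o23 o34.le HT
  have L2 := level (r := r) (t1 := g-t4) (t2 := g-t3) (t3 := g-t2) (t4 := g-t1) (CC_refl hh hC) hr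
    (by apply sq_le_sq.2; rw [abs_of_pos (a := g - t3) (by linarith), abs_le]; constructor <;> linarith)
    (by linarith) (by linarith) (by linarith) H'
  constructor
  · rw [Me_apply _ _ _ _ measurableSet_Ioi, Me_apply _ _ _ _ measurableSet_Ioi]
    simp only [Set.mem_Ioi]
    rw [L1, L2, Kint t2p o23 (t1 := t1) (t4 := t4) hP (L1 ▸ Set.inter_subset_left), 
      Kint (a := g-t3) (b := g-t2) (t1 := g-t4) (t4 := g-t1) (by linarith) (by linarith) hP' (L2 ▸ Set.inter_subset_left)]
    rw [Kident hh hg (coeffs HT).1]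
    congr 1
    ring
  · rw [L2, Set.nonempty_Ioo]
    linarith

lemma level_eq' {e1 e2 e3 e4 h r : ℝ} (hh : h = (e1+e2+e3+e4)/2) (hr : 0 < r) :
    Me e1 e2 e3 e4 (Set.Ioi r) = Me (h-e3) (h-e2) (h-e1) (h-e4) (Set.Ioi r) := by
  by_cases hne : (Iset e1 e2 e3 e4 ∩ {τ | r < Rf e1 e2 e3 e4 τ}).Nonempty
  · exact (level_eq hh hr hne).1
  · by_cases hne2 : (Iset (h-e3) (h-e2) (h-e1) (h-e4) ∩ {τ | r < Rf (h-e3) (h-e2) (h-e1) (h-e4) τ}).Nonempty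
    · have := (level_eq (h := h) (by subst hh; ring) hr hne2).2
      simp only [sub_sub_cancel] at this
      exact absurd this hne
    · rw [Me_apply _ _ _ _ measurableSet_Ioi, Me_apply _ _ _ _ measurableSet_Ioi]
      rw [Set.not_nonempty_iff_eq_empty] at hne hne2
      simp only [Set.mem_Ioi]
      rw [hne, hne2]
      simp

lemma Me_Iic (e1 e2 e3 e4 : ℝ) {a : ℝ} (ha : a ≤ 0) : Me e1 e2 e3 e4 (Set.Iic a) = 0 := by
  rw [Me_apply _ _ _ _ measurableSet_Iic]
  have : Iset e1 e2 e3 e4 ∩ {τ | Rf e1 e2 e3 e4 τ ∈ Set.Iic a} = ∅ := by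
    ext τ
    simp only [Set.mem_inter_iff, Set.mem_ofPred_eq, Set.mem_Iic, Set.mem_empty_iff_false, iff_false, not_and, not_le]
    intro h
    exact ha.trans_lt (Rf_pos h)
  rw [this]; simp

lemma Me_fin (e1 e2 e3 e4 : ℝ) : IsFiniteMeasure (Me e1 e2 e3 e4) := by
  constructor
  rw [Me_apply _ _ _ _ MeasurableSet.univ]
  simp only [Set.mem_univ, Set.ofPred_true, Set.inter_univ]
  calc ∫⁻ τ in Iset e1 e2 e3 e4, ENNReal.ofReal (Kf e1 e2 e3 e4 τ) 
      ≤ ∫⁻ τ in Iset e1 e2 e3 e4, ENNReal.ofReal ((|e2-e1+e4| + |e1|) * e3^2) := by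
        apply setLIntegral_mono' (measurableSet_Iset _ _ _ _)
        intro τ hτ
        apply ENNReal.ofReal_le_ofReal
        obtain ⟨s2, s4, s1, s3⟩ := Iset_sq hτ
        obtain ⟨h0, h2, h4, h1, h3⟩ := Iset_pos hτ
        rw [Kf, div_le_iff₀ (by positivity)]
        have hq : |e4| * |e2| ≤ τ^2 := by rw [sq]; gcongr
        have h5 : (e2-e1+e4) * τ^2 - e4*e1*e2 ≤ (|e2-e1+e4| + |e1|) * τ^2 := by
          have : (e2-e1+e4) * τ^2 ≤ |e2-e1+e4| * τ^2 := by gcongr; exact le_abs_self _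
          have h6 : -(e4*e1*e2) ≤ |e1| * (|e4| * |e2|) := by
            rw [show |e1| * (|e4| * |e2|) = |e4*e1*e2| by rw [abs_mul, abs_mul]; ring]
            exact neg_le_abs _
          have h7 : |e1| * (|e4| * |e2|) ≤ |e1| * τ^2 := by gcongr
          linarith
        have h8 : 0 ≤ e3^2 - τ^2 := by linarith
        calc _ ≤ (|e2-e1+e4| + |e1|) * τ^2 * (e3^2 - τ^2) := by gcongr
          _ ≤ (|e2-e1+e4| + |e1|) * τ^2 * e3^2 := by gcongr; linarith [sq_nonneg τ]
          _ = _ := by ring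
    _ < ⊤ := by
        rw [setLIntegral_const]
        exact ENNReal.mul_lt_top ENNReal.ofReal_lt_top (by simp [Iset])

lemma Me_Ioi0 (e1 e2 e3 e4 : ℝ) :
    Filter.Tendsto (fun n : ℕ => Me e1 e2 e3 e4 (Set.Ioi (1/((n:ℝ)+1)))) Filter.atTop (nhds (Me e1 e2 e3 e4 (Set.Ioi 0))) := by
  have : (Set.Ioi (0:ℝ)) = ⋃ n : ℕ, Set.Ioi (1/((n:ℝ)+1)) := by
    ext x
    simp only [Set.mem_Ioi, Set.mem_iUnion]
    constructor
    · intro hx; exact exists_nat_one_div_lt hx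
    · rintro ⟨n, hn⟩; exact lt_trans (by positivity) hn
  rw [this]
  apply tendsto_measure_iUnion_atTop
  intro m n hmn
  apply Set.Ioi_subset_Ioi
  apply one_div_le_one_div_of_le (by positivity)
  have : (m:ℝ) ≤ n := by exact_mod_cast hmn
  linarith

lemma Me_eq {e1 e2 e3 e4 h : ℝ} (hh : h = (e1+e2+e3+e4)/2) :
    Me e1 e2 e3 e4 = Me (h-e3) (h-e2) (h-e1) (h-e4) := by
  have h0 : Me e1 e2 e3 e4 (Set.Ioi 0) = Me (h-e3) (h-e2) (h-e1) (h-e4) (Set.Ioi 0) := by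
    refine tendsto_nhds_unique (Me_Ioi0 e1 e2 e3 e4) ?_
    refine (Me_Ioi0 (h-e3) (h-e2) (h-e1) (h-e4)).congr fun n => ?_
    exact (level_eq' hh (by positivity)).symm
  have := Me_fin e1 e2 e3 e4
  have := Me_fin (h-e3) (h-e2) (h-e1) (h-e4)
  have hu : ∀ a b c d : ℝ, Me a b c d Set.univ = Me a b c d (Set.Ioi 0) := by
    intro a b c d
    rw [← Set.Iic_union_Ioi (a := (0:ℝ)), measure_union (Set.Iic_disjoint_Ioi le_rfl) measurableSet_Ioi,
      Me_Iic _ _ _ _ le_rfl, zero_add]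
  apply Measure.ext_of_Iic
  intro a
  rcases le_or_gt a 0 with ha | ha
  · rw [Me_Iic _ _ _ _ ha, Me_Iic _ _ _ _ ha]
  · rw [← Set.compl_Ioi, measure_compl measurableSet_Ioi (measure_ne_top _ _),
      measure_compl measurableSet_Ioi (measure_ne_top _ _), level_eq' hh ha, hu, hu, h0]

lemma lint_eq {e1 e2 e3 e4 h : ℝ} (hh : h = (e1+e2+e3+e4)/2) {φ : ℝ → ENNReal} (hφ : Measurable φ) :
    ∫⁻ τ in Iset e1 e2 e3 e4, ENNReal.ofReal (Kf e1 e2 e3 e4 τ) * φ (Rf e1 e2 e3 e4 τ)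
     = ∫⁻ τ in Iset (h-e3) (h-e2) (h-e1) (h-e4), ENNReal.ofReal (Kf (h-e3) (h-e2) (h-e1) (h-e4) τ) * φ (Rf (h-e3) (h-e2) (h-e1) (h-e4) τ) := by
  have key : ∀ a b c d : ℝ, ∫⁻ τ in Iset a b c d, ENNReal.ofReal (Kf a b c d τ) * φ (Rf a b c d τ) = ∫⁻ r, φ r ∂(Me a b c d) := by
    intro a b c d
    have h1 := lintegral_withDensity_eq_lintegral_mul (volume.restrict (Iset a b c d))
      (measurable_Kf a b c d).ennreal_ofReal (g := fun τ => φ (Rf a b c d τ)) (hφ.comp (measurable_Rf _ _ _ _))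
    rw [Me, lintegral_map hφ (measurable_Rf _ _ _ _)]
    exact h1.symm
  rw [key, key, Me_eq hh]

noncomputable def Iz (p q y : ℝ) : ℝ :=
  ∫ z in (-1 : ℝ)..1, Real.exp (z * y) * (1 - z) ^ (p - 1) * (1 + z) ^ (q - 1)

lemma ii_one_sub {p : ℝ} (hp : 0 < p) (a b : ℝ) :
    IntervalIntegrable (fun z : ℝ => (1 - z) ^ (p - 1)) volume a b := by
  have h := intervalIntegral.intervalIntegrable_rpow' (a := 1 - a) (b := 1 - b) (r := p - 1) (by linarith)
  have := h.comp_sub_left 1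
  simpa using this

lemma ii_one_add {p : ℝ} (hp : 0 < p) (a b : ℝ) :
    IntervalIntegrable (fun z : ℝ => (1 + z) ^ (p - 1)) volume a b := by
  have h := intervalIntegral.intervalIntegrable_rpow' (a := 1 + a) (b := 1 + b) (r := p - 1) (by linarith)
  have := h.comp_add_left 1
  simpa using this

lemma ii_right {p q y : ℝ} (hp : 0 < p) {a : ℝ} (ha : 0 ≤ a) (ha1 : a ≤ 1) :
    IntervalIntegrable (fun z : ℝ => Real.exp (z * y) * (1 - z) ^ (p - 1) * (1 + z) ^ (q - 1)) volume a 1 := by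
  apply IntervalIntegrable.mul_continuousOn
  · exact (ii_one_sub hp _ _).continuousOn_mul (by fun_prop)
  · apply ContinuousOn.rpow_const (by fun_prop)
    intro z hz
    rw [Set.uIcc_of_le ha1] at hz
    left; linarith [hz.1]

lemma ii_left {p q y : ℝ} (hq : 0 < q) :
    IntervalIntegrable (fun z : ℝ => Real.exp (z * y) * (1 - z) ^ (p - 1) * (1 + z) ^ (q - 1)) volume (-1) 0 := by
  apply IntervalIntegrable.continuousOn_mul (ii_one_add hq _ _)
  apply ContinuousOn.mul (by fun_prop)
  apply ContinuousOn.rpow_const (by fun_prop)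
  intro z hz
  rw [Set.uIcc_of_le (by norm_num)] at hz
  left; linarith [hz.2]

lemma ii_full {p q y : ℝ} (hp : 0 < p) (hq : 0 < q) :
    IntervalIntegrable (fun z : ℝ => Real.exp (z * y) * (1 - z) ^ (p - 1) * (1 + z) ^ (q - 1)) volume (-1) 1 :=
  (ii_left hq).trans (ii_right hp le_rfl zero_le_one)

lemma Iz_lower {p q : ℝ} (hp : 0 < p) (hq : 0 < q) :
    ∃ c, 0 < c ∧ ∀ y, 0 ≤ y → c * (Real.exp y / (1 + 2 * y) ^ p) ≤ Iz p q y := by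
  refine ⟨min 1 (2 ^ (q - 1)) * Real.exp (-1/2) / p, by positivity, fun y hy => ?_⟩
  set m : ℝ := min 1 (2 ^ (q - 1)) with hm
  have hm0 : 0 < m := by positivity
  set d : ℝ := 1 / (1 + 2 * y) with hd
  have hd0 : 0 < d := by positivity
  have hd1 : d ≤ 1 := by rw [hd, div_le_one (by positivity)]; linarith
  have hyd : y * d ≤ 1/2 := by
    rw [hd, mul_one_div, div_le_iff₀ (by positivity)]; linarith
  have hf0 : ∀ z ∈ Set.Icc (-1:ℝ) 1, 0 ≤ Real.exp (z * y) * (1 - z) ^ (p - 1) * (1 + z) ^ (q - 1) := by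
    intro z hz
    have : 0 ≤ 1 - z := by linarith [hz.2]
    have : 0 ≤ 1 + z := by linarith [hz.1]
    positivity
  have hI := ii_full (y := y) hp hq
  have h1 : Iz p q y = (∫ z in (-1 : ℝ)..(1-d), Real.exp (z * y) * (1 - z) ^ (p - 1) * (1 + z) ^ (q - 1))
      + ∫ z in (1-d)..1, Real.exp (z * y) * (1 - z) ^ (p - 1) * (1 + z) ^ (q - 1) := by
    rw [Iz, intervalIntegral.integral_add_adjacent_intervals]
    · apply hI.mono_set
      rw [Set.uIcc_of_le (by linarith), Set.uIcc_of_le (by linarith)]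
      exact Set.Icc_subset_Icc_right (by linarith)
    · exact ii_right hp (by linarith) (by linarith)
  have h2 : 0 ≤ ∫ z in (-1 : ℝ)..(1-d), Real.exp (z * y) * (1 - z) ^ (p - 1) * (1 + z) ^ (q - 1) := by
    apply intervalIntegral.integral_nonneg (by linarith)
    intro z hz
    exact hf0 z ⟨hz.1, by linarith [hz.2]⟩
  have h3 : ∫ z in (1-d)..1, m * Real.exp (-1/2) * Real.exp y * (1 - z) ^ (p - 1) ≤ ∫ z in (1-d)..1, Real.exp (z * y) * (1 - z) ^ (p - 1) * (1 + z) ^ (q - 1) := by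
    apply intervalIntegral.integral_mono_on (by linarith) ((ii_one_sub hp _ _).const_mul _) (ii_right hp (by linarith) (by linarith))
    intro z hz
    have hz0 : 0 ≤ z := by linarith [hz.1]
    have a1 : m ≤ (1 + z) ^ (q - 1) := by
      rcases le_total 1 q with h | h
      · exact (min_le_left _ _).trans (Real.one_le_rpow (by linarith) (by linarith))
      · exact (min_le_right _ _).trans (Real.rpow_le_rpow_of_nonpos (by linarith) (by linarith [hz.2]) (by linarith))
    have a2 : Real.exp (-1/2) * Real.exp y ≤ Real.exp (z * y) := by
      rw [← Real.exp_add]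
      apply Real.exp_le_exp.2
      have : y * (1 - z) ≤ y * d := by gcongr; linarith [hz.1]
      linarith
    have : 0 ≤ 1 - z := by linarith [hz.2]
    calc m * Real.exp (-1/2) * Real.exp y * (1 - z) ^ (p - 1) = (Real.exp (-1/2) * Real.exp y) * (1 - z) ^ (p - 1) * m := by ring
      _ ≤ _ := by gcongr
  have h4 : ∫ z in (1-d)..1, (1 - z) ^ (p - 1) = d ^ p / p := by
    rw [intervalIntegral.integral_comp_sub_left (fun u => u ^ (p-1)) 1, integral_rpow (by left; linarith)]
    simp [hp.ne']
  rw [intervalIntegral.integral_const_mul, h4] at h3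
  have h5 : d ^ p = 1 / (1 + 2 * y) ^ p := by
    rw [hd, Real.div_rpow zero_le_one (by positivity), Real.one_rpow]
  rw [h1]
  refine le_trans (le_of_eq ?_) (h3.trans (le_add_of_nonneg_left h2))
  rw [h5]
  field_simp

lemma Iz_upper {p q : ℝ} (hp : 0 < p) (hq : 0 < q) :
    ∃ c, 0 < c ∧ ∀ y, 0 ≤ y → Iz p q y ≤ c * (Real.exp y / (1 + 2 * y) ^ p) := by
  set K : ℝ := ∫ z in (-1 : ℝ)..0, (1 - z) ^ (p - 1) * (1 + z) ^ (q - 1) with hK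
  set M : ℝ := max 1 (2 ^ (q - 1)) with hM
  have hM0 : 0 < M := by positivity
  have hK0 : 0 ≤ K := by
    apply intervalIntegral.integral_nonneg (by norm_num)
    intro z hz
    have : 0 ≤ 1 - z := by linarith [hz.2]
    have : 0 ≤ 1 + z := by linarith [hz.1]
    positivity
  refine ⟨(K * p + M) * (Real.exp (1/2) * Real.Gamma p * 2 ^ p), by have := Real.Gamma_pos_of_pos hp; positivity, fun y hy => ?_⟩
  have iiA : IntervalIntegrable (fun z : ℝ => Real.exp (z * y) * (1 - z) ^ (p - 1)) volume 0 1 :=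
    (ii_one_sub hp _ _).continuousOn_mul (by fun_prop)
  set A : ℝ := ∫ z in (0 : ℝ)..1, Real.exp (z * y) * (1 - z) ^ (p - 1) with hA
  have h1 : Iz p q y = (∫ z in (-1 : ℝ)..0, Real.exp (z * y) * (1 - z) ^ (p - 1) * (1 + z) ^ (q - 1))
      + ∫ z in (0:ℝ)..1, Real.exp (z * y) * (1 - z) ^ (p - 1) * (1 + z) ^ (q - 1) := by
    rw [Iz, intervalIntegral.integral_add_adjacent_intervals (ii_left hq) (ii_right hp le_rfl zero_le_one)]
  have h2 : ∫ z in (0:ℝ)..1, Real.exp (z * y) * (1 - z) ^ (p - 1) * (1 + z) ^ (q - 1) ≤ M * A := by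
    rw [hA, ← intervalIntegral.integral_const_mul]
    apply intervalIntegral.integral_mono_on zero_le_one (ii_right hp le_rfl zero_le_one) (iiA.const_mul _)
    intro z hz
    have a1 : (1 + z) ^ (q - 1) ≤ M := by
      rcases le_total 1 q with h | h
      · exact (Real.rpow_le_rpow (by linarith [hz.1]) (by linarith [hz.2]) (by linarith)).trans (le_max_right _ _)
      · exact (Real.rpow_le_one_of_one_le_of_nonpos (by linarith [hz.1]) (by linarith)).trans (le_max_left _ _)
    have : 0 ≤ 1 - z := by linarith [hz.2]
    rw [mul_comm M]
    gcongr
  have h3 : ∫ z in (-1 : ℝ)..0, Real.exp (z * y) * (1 - z) ^ (p - 1) * (1 + z) ^ (q - 1) ≤ K := by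
    have hh : IntervalIntegrable (fun z : ℝ => (1 - z) ^ (p - 1) * (1 + z) ^ (q - 1)) volume (-1) 0 := by
      have := ii_left (p := p) (y := 0) hq
      simpa using this
    apply intervalIntegral.integral_mono_on (by norm_num) (ii_left hq) hh
    intro z hz
    have : 0 ≤ 1 - z := by linarith [hz.2]
    have : 0 ≤ 1 + z := by linarith [hz.1]
    have : Real.exp (z * y) ≤ 1 := Real.exp_le_one_iff.2 (mul_nonpos_of_nonpos_of_nonneg hz.2 hy)
    calc _ = Real.exp (z * y) * ((1 - z) ^ (p - 1) * (1 + z) ^ (q - 1)) := by ring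
      _ ≤ 1 * ((1 - z) ^ (p - 1) * (1 + z) ^ (q - 1)) := by gcongr
      _ = _ := one_mul _
  have h4 : 1 / p ≤ A := by
    have : ∫ z in (0:ℝ)..1, (1 - z) ^ (p - 1) = 1 / p := by
      rw [intervalIntegral.integral_comp_sub_left (fun u => u ^ (p-1)) 1, integral_rpow (by left; linarith)]
      simp [hp.ne']
    rw [← this]
    apply intervalIntegral.integral_mono_on zero_le_one (ii_one_sub hp _ _) iiA
    intro z hz
    have : 0 ≤ 1 - z := by linarith [hz.2]
    exact le_mul_of_one_le_left (by positivity) (Real.one_le_exp (mul_nonneg hz.1 hy))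
  have h5 : A ≤ Real.exp y * Real.exp (1/2) * (Real.Gamma p * (2 ^ p / (1 + 2 * y) ^ p)) := by
    have e1 : A = ∫ u in (0:ℝ)..1, Real.exp ((1 - u) * y) * u ^ (p - 1) := by
      have := intervalIntegral.integral_comp_sub_left (a := 0) (b := 1) (fun u => Real.exp ((1 - u) * y) * u ^ (p - 1)) (1:ℝ)
      simpa using this
    have e2 := Real.integral_rpow_mul_exp_neg_mul_Ioi hp (r := (1 + 2 * y)/2) (by positivity)
    have e3 : (1 / ((1 + 2 * y) / 2)) ^ p = 2 ^ p / (1 + 2 * y) ^ p := by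
      rw [one_div_div, Real.div_rpow (by norm_num) (by positivity)]
    rw [← e3, mul_comm (Real.Gamma p), ← e2, e1, intervalIntegral.integral_of_le zero_le_one]
    have hint : IntegrableOn (fun t : ℝ => t ^ (p - 1) * Real.exp (-((1 + 2 * y) / 2 * t))) (Set.Ioi 0) := by
      by_contra hcon
      rw [integral_undef hcon] at e2
      have : 0 < (1 / ((1 + 2 * y) / 2)) ^ p * Real.Gamma p := mul_pos (by positivity) (Real.Gamma_pos_of_pos hp)
      linarith
    calc ∫ u in Set.Ioc 0 1, Real.exp ((1 - u) * y) * u ^ (p - 1)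
        ≤ ∫ u in Set.Ioc 0 1, Real.exp y * Real.exp (1/2) * (u ^ (p - 1) * Real.exp (-((1 + 2 * y) / 2 * u))) := by
          apply setIntegral_mono_on _ ((hint.mono_set Set.Ioc_subset_Ioi_self).const_mul _) measurableSet_Ioc
          · intro u hu
            have h0 : 0 < u := hu.1
            have : Real.exp ((1 - u) * y) ≤ Real.exp y * Real.exp (1/2) * Real.exp (-((1 + 2 * y) / 2 * u)) := by
              rw [← Real.exp_add, ← Real.exp_add]
              apply Real.exp_le_exp.2
              nlinarith [hu.2]
            calc _ ≤ (Real.exp y * Real.exp (1/2) * Real.exp (-((1 + 2 * y) / 2 * u))) * u ^ (p - 1) := by gcongr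
              _ = _ := by ring
          · rw [← intervalIntegrable_iff_integrableOn_Ioc_of_le zero_le_one]
            have := (intervalIntegral.intervalIntegrable_rpow' (a := 0) (b := 1) (r := p - 1) (by linarith)).continuousOn_mul (g := fun u => Real.exp ((1 - u) * y)) (by fun_prop)
            exact this
      _ = Real.exp y * Real.exp (1/2) * ∫ u in Set.Ioc 0 1, (u ^ (p - 1) * Real.exp (-((1 + 2 * y) / 2 * u))) := integral_const_mul _ _
      _ ≤ _ := by
          gcongr ?_ * ?_
          apply setIntegral_mono_set hint _ (Set.Ioc_subset_Ioi_self.eventuallyLE)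
          filter_upwards [ae_restrict_mem measurableSet_Ioi] with u hu
          have : (0:ℝ) < u := hu
          simp only [Pi.zero_apply]
          positivity
  calc Iz p q y ≤ K + M * A := by rw [h1]; linarith
    _ ≤ K * p * A + M * A := by
        gcongr
        rw [mul_assoc]
        apply le_mul_of_one_le_right hK0
        rw [div_le_iff₀ hp] at h4
        linarith
    _ = (K * p + M) * A := by ring
    _ ≤ (K * p + M) * (Real.exp y * Real.exp (1/2) * (Real.Gamma p * (2 ^ p / (1 + 2 * y) ^ p))) := by gcongr
    _ = _ := by ring

noncomputable def cE (k : ℝ) : ℝ := Real.Gamma (k + 1/2) / (Real.sqrt Real.pi * Real.Gamma k)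

lemma cE_pos {k : ℝ} (hk : 0 < k) : 0 < cE k := by
  have h1 := Real.Gamma_pos_of_pos hk
  have h2 := Real.Gamma_pos_of_pos (s := k + 1/2) (by linarith)
  have := Real.pi_pos
  unfold cE; positivity

lemma Erk1_pos_eq (k x v : ℝ) : Erk1 k x v = cE k * Iz k (k+1) (x*v) := by
  unfold Erk1 Iz cE
  congr 1
  apply intervalIntegral.integral_congr
  intro z _
  simp only [add_sub_cancel_right, mul_assoc]

lemma Iz_neg (p q y : ℝ) : Iz p q (-y) = Iz q p y := by
  unfold Iz
  have := intervalIntegral.integral_comp_neg (a := -1) (b := 1) (fun z : ℝ => Real.exp (z * y) * (1 - z) ^ (q - 1) * (1 + z) ^ (p - 1))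
  rw [neg_neg] at this
  rw [← this]
  apply intervalIntegral.integral_congr
  intro z _
  simp only [sub_neg_eq_add, ← sub_eq_add_neg, mul_neg, neg_mul]
  ring

lemma Erk1_neg_eq (k x v : ℝ) : Erk1 k (-x) v = cE k * Iz (k+1) k (x*v) := by
  rw [Erk1_pos_eq, neg_mul, Iz_neg]

lemma measurable_Iz (p q : ℝ) : Measurable (Iz p q) := by
  have : Iz p q = fun y => ∫ z in Set.Ioc (-1:ℝ) 1, Real.exp (z * y) * (1 - z) ^ (p - 1) * (1 + z) ^ (q - 1) := by
    ext y
    rw [Iz, intervalIntegral.integral_of_le (by norm_num)]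
  rw [this]
  apply StronglyMeasurable.measurable
  apply StronglyMeasurable.integral_prod_right (f := fun y z : ℝ => Real.exp (z * y) * (1 - z) ^ (p - 1) * (1 + z) ^ (q - 1))
  apply Measurable.stronglyMeasurable
  unfold Function.uncurry
  simp only
  have h1 : Measurable fun a : ℝ × ℝ => (1 - a.2) ^ (p - 1) := by
    apply Measurable.pow_const; fun_prop
  have h2 : Measurable fun a : ℝ × ℝ => (1 + a.2) ^ (q - 1) := by
    apply Measurable.pow_const; fun_prop
  have h3 : Measurable fun a : ℝ × ℝ => Real.exp (a.2 * a.1) := by fun_prop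
  exact (h3.mul h1).mul h2

lemma measurable_Erk1 (k x : ℝ) : Measurable (fun v => Erk1 k x v) := by
  simp only [Erk1_pos_eq]
  have := measurable_Iz k (k+1)
  fun_prop

lemma bracket_lint {k A B x v : ℝ} (hk : 0 < k) (hA : 0 ≤ A) (hB : 0 ≤ B) :
    ENNReal.ofReal (A * Erk1 k x v + B * Erk1 k (-x) v) =
    ∫⁻ z in Set.Ioo (-1:ℝ) 1, ENNReal.ofReal (cE k * (Real.exp (z * (x * v)) * ((1 - z) * (1 + z)) ^ (k - 1) * (A * (1 + z) + B * (1 - z)))) := by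
  have i1 := (ii_full (y := x * v) hk (by linarith : 0 < k + 1)).const_mul (A * cE k)
  have i2 : IntervalIntegrable (fun z : ℝ => B * cE k * (Real.exp (z * (x * v)) * (1 - z) ^ (k + 1 - 1) * (1 + z) ^ (k - 1))) volume (-1) 1 := 
    (ii_full (by linarith : 0 < k + 1) hk).const_mul (B * cE k)
  have hc := cE_pos hk
  have e : ∀ z ∈ Set.Ioo (-1:ℝ) 1, A * cE k * (Real.exp (z * (x * v)) * (1 - z) ^ (k - 1) * (1 + z) ^ (k + 1 - 1))
     + B * cE k * (Real.exp (z * (x * v)) * (1 - z) ^ (k + 1 - 1) * (1 + z) ^ (k - 1)) =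
     cE k * (Real.exp (z * (x * v)) * ((1 - z) * (1 + z)) ^ (k - 1) * (A * (1 + z) + B * (1 - z))) := by
    intro z hz
    have a1 : 0 < 1 - z := by linarith [hz.2]
    have a2 : 0 < 1 + z := by linarith [hz.1]
    rw [show k + 1 - 1 = (k - 1) + 1 by ring, Real.rpow_add_one a1.ne', Real.rpow_add_one a2.ne', Real.mul_rpow a1.le a2.le]
    ring
  have h1 : A * Erk1 k x v + B * Erk1 k (-x) v = ∫ z in Set.Ioo (-1:ℝ) 1, cE k * (Real.exp (z * (x * v)) * ((1 - z) * (1 + z)) ^ (k - 1) * (A * (1 + z) + B * (1 - z))) := by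
    rw [← setIntegral_congr_fun measurableSet_Ioo e, ← integral_Ioc_eq_integral_Ioo, ← intervalIntegral.integral_of_le (by norm_num),
      intervalIntegral.integral_add i1 i2, intervalIntegral.integral_const_mul, intervalIntegral.integral_const_mul,
      Erk1_pos_eq, Erk1_neg_eq, Iz, Iz]
    ring
  rw [h1]
  rw [ofReal_integral_eq_lintegral_ofReal]
  · have i3 := i1.add i2
    rw [intervalIntegrable_iff_integrableOn_Ioc_of_le (by norm_num), integrableOn_Ioc_iff_integrableOn_Ioo] at i3
    exact i3.congr_fun e measurableSet_Ioo
  · filter_upwards [ae_restrict_mem measurableSet_Ioo] with z hz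
    have a1 : 0 < 1 - z := by linarith [hz.2]
    have a2 : 0 < 1 + z := by linarith [hz.1]
    simp only [Pi.zero_apply]
    positivity

noncomputable def FA (k x1 x2 x3 l1 l2 l3 n1 n2 : ℝ) : ℝ :=
      ((n1 - l2) * (l1 - n2) * Erk1 k ((x1 - x2) / 2) (n1 - n2)
        + (l1 - n1) * (l2 - n2) * Erk1 k (-(x1 - x2) / 2) (n1 - n2))
      * ((n1 - l3) * (n2 - l3)) * Real.exp ((x1 + x2 - 2 * x3) * (n1 + n2) / 2)
      * Wk k l1 l2 l3 n1 n2

noncomputable def LF (k x1 x2 x3 l1 l2 l3 : ℝ) : ENNReal :=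
  ∫⁻ n2 in Set.Ioo l3 l2, ∫⁻ n1 in Set.Ioo l2 l1, ENNReal.ofReal (FA k x1 x2 x3 l1 l2 l3 n1 n2)

noncomputable def Phi (k x1 x2 x3 l1 l2 l3 s ζ τ : ℝ) : ENNReal :=
  (Iset (s/2-l1) (s/2-l2) (s/2-l3) (ζ-s/2)).indicator
    (fun τ => ENNReal.ofReal (Kf (s/2-l1) (s/2-l2) (s/2-l3) (ζ-s/2) τ)
      * ENNReal.ofReal ((Rf (s/2-l1) (s/2-l2) (s/2-l3) (ζ-s/2) τ)^(k-1))) τ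
    * ENNReal.ofReal (2 * cE k * Real.exp (x1*ζ+x2*(s-ζ)-x3*s))

lemma Phi_meas (k x1 x2 x3 l1 l2 l3 : ℝ) :
    Measurable (fun p : (ℝ × ℝ) × ℝ => Phi k x1 x2 x3 l1 l2 l3 p.1.1 p.2 p.1.2) := by
  unfold Phi
  apply Measurable.mul _ (by fun_prop)
  have hS : MeasurableSet {p : (ℝ × ℝ) × ℝ | p.1.2 ∈ Iset (p.1.1/2-l1) (p.1.1/2-l2) (p.1.1/2-l3) (p.2-p.1.1/2)} := by
    apply MeasurableSet.inter
    · exact measurableSet_lt (f := fun p : (ℝ × ℝ) × ℝ => max |p.1.1/2-l2| |p.2-p.1.1/2|) (g := fun p => p.1.2) (by fun_prop) (by fun_prop)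
    · exact measurableSet_lt (f := fun p : (ℝ × ℝ) × ℝ => p.1.2) (g := fun p => min (-(p.1.1/2-l1)) (p.1.1/2-l3)) (by fun_prop) (by fun_prop)
  have hg : Measurable (fun p : (ℝ × ℝ) × ℝ => ENNReal.ofReal (Kf (p.1.1/2-l1) (p.1.1/2-l2) (p.1.1/2-l3) (p.2-p.1.1/2) p.1.2)
      * ENNReal.ofReal ((Rf (p.1.1/2-l1) (p.1.1/2-l2) (p.1.1/2-l3) (p.2-p.1.1/2) p.1.2)^(k-1))) := by
    have a : Measurable (fun p : (ℝ × ℝ) × ℝ => ENNReal.ofReal (Kf (p.1.1/2-l1) (p.1.1/2-l2) (p.1.1/2-l3) (p.2-p.1.1/2) p.1.2)) := by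
      apply Measurable.ennreal_ofReal
      unfold Kf; fun_prop
    have b : Measurable (fun p : (ℝ × ℝ) × ℝ => ENNReal.ofReal ((Rf (p.1.1/2-l1) (p.1.1/2-l2) (p.1.1/2-l3) (p.2-p.1.1/2) p.1.2)^(k-1))) := by
      apply Measurable.ennreal_ofReal
      apply Measurable.pow_const
      unfold Rf; fun_prop
    exact a.mul b
  exact hg.indicator hS

lemma mem_Iset_iff (l1 l2 l3 n1 n2 ζ : ℝ) :
    (n1 - n2)/2 ∈ Iset ((n1+n2)/2-l1) ((n1+n2)/2-l2) ((n1+n2)/2-l3) (ζ-(n1+n2)/2) ↔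
      (n2 ∈ Set.Ioo l3 l2 ∧ n1 ∈ Set.Ioo l2 l1) ∧ ζ ∈ Set.Ioo n2 n1 := by
  unfold Iset
  simp only [Set.mem_Ioo, max_lt_iff, lt_min_iff, abs_lt]
  constructor
  · rintro ⟨⟨⟨a, b⟩, c, d⟩, e, f⟩
    refine ⟨⟨⟨?_, ?_⟩, ?_, ?_⟩, ?_, ?_⟩ <;> linarith
  · rintro ⟨⟨⟨a, b⟩, c, d⟩, e, f⟩
    refine ⟨⟨⟨?_, ?_⟩, ?_, ?_⟩, ?_, ?_⟩ <;> linarith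

lemma image_aff {n1 n2 : ℝ} (h : n2 < n1) :
    (fun z : ℝ => (n1-n2)/2 * z + (n1+n2)/2) '' Set.Ioo (-1) 1 = Set.Ioo n2 n1 := by
  ext ζ
  simp only [Set.mem_image, Set.mem_Ioo]
  constructor
  · rintro ⟨z, ⟨h1, h2⟩, rfl⟩
    constructor <;> nlinarith
  · rintro ⟨h1, h2⟩
    have : 0 < n1 - n2 := by linarith
    refine ⟨(ζ - (n1+n2)/2)/((n1-n2)/2), ⟨?_, ?_⟩, ?_⟩
    · rw [lt_div_iff₀ (by positivity)]; linarith
    · rw [div_lt_iff₀ (by positivity)]; linarith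
    · field_simp; ring

lemma alg1 {l1 l2 l3 m τ z : ℝ} (h : τ ≠ 0) :
    τ * Kf (m-l1) (m-l2) (m-l3) (τ*z) τ * 2 =
      ((m+τ-l2)*(l1-(m-τ))*(1+z) + (l1-(m+τ))*(l2-(m-τ))*(1-z)) * ((m+τ-l3)*(m-τ-l3)) := by
  unfold Kf
  field_simp
  ring

lemma alg2 {l1 l2 l3 m τ z : ℝ} (h : τ ≠ 0) :
    Rf (m-l1) (m-l2) (m-l3) (τ*z) τ =
      ((l1 - (m+τ)) * (l1 - (m-τ)) * (m+τ - l2) * (l2 - (m-τ)) * (m+τ - l3) * (m-τ - l3)) * ((1-z)*(1+z)) := by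
  unfold Rf
  field_simp
  ring

lemma rep {k x1 x2 x3 l1 l2 l3 n1 n2 : ℝ} (hk : 0 < k) (h2 : n2 ∈ Set.Ioo l3 l2) (h1 : n1 ∈ Set.Ioo l2 l1) :
    ENNReal.ofReal (FA k x1 x2 x3 l1 l2 l3 n1 n2) = ∫⁻ ζ, Phi k x1 x2 x3 l1 l2 l3 (n1+n2) ζ ((n1-n2)/2) := by
  have hτ : 0 < (n1 - n2)/2 := by linarith [h1.1, h2.2]
  have hlt : n2 < n1 := by linarith
  have p1 : 0 < n1 - l2 := by linarith [h1.1, h2.2]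
  have p2 : 0 < l1 - n2 := by linarith [h1.1, h1.2, h2.2]
  have p3 : 0 < l1 - n1 := by linarith [h1.2]
  have p4 : 0 < l2 - n2 := by linarith [h2.2]
  have p5 : 0 < n1 - l3 := by linarith [h2.1]
  have p6 : 0 < n2 - l3 := by linarith [h2.1]
  have hc := cE_pos hk
  have hP : (fun ζ => Phi k x1 x2 x3 l1 l2 l3 (n1+n2) ζ ((n1-n2)/2)) = (Set.Ioo n2 n1).indicator
      (fun ζ => (ENNReal.ofReal (Kf ((n1+n2)/2-l1) ((n1+n2)/2-l2) ((n1+n2)/2-l3) (ζ-(n1+n2)/2) ((n1-n2)/2))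
      * ENNReal.ofReal ((Rf ((n1+n2)/2-l1) ((n1+n2)/2-l2) ((n1+n2)/2-l3) (ζ-(n1+n2)/2) ((n1-n2)/2))^(k-1)))
    * ENNReal.ofReal (2 * cE k * Real.exp (x1*ζ+x2*((n1+n2)-ζ)-x3*(n1+n2)))) := by
    ext ζ
    unfold Phi
    by_cases hζ : ζ ∈ Set.Ioo n2 n1
    · rw [Set.indicator_of_mem hζ, Set.indicator_of_mem]
      exact (mem_Iset_iff _ _ _ _ _ _).2 ⟨⟨h2, h1⟩, hζ⟩
    · rw [Set.indicator_of_notMem hζ, Set.indicator_of_notMem, zero_mul]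
      intro hh
      exact hζ ((mem_Iset_iff _ _ _ _ _ _).1 hh).2
  rw [hP, lintegral_indicator measurableSet_Ioo, ← image_aff hlt,
    lintegral_image_eq_lintegral_abs_deriv_mul (f' := fun _ => (n1-n2)/2) measurableSet_Ioo]
  rotate_left
  · intro z _
    have := ((hasDerivAt_id z).const_mul ((n1-n2)/2)).add_const ((n1+n2)/2)
    simpa using this.hasDerivWithinAt
  · intro a _ b _ hab
    simp only at hab
    have : (n1-n2)/2 * (a - b) = 0 := by linarith
    rcases mul_eq_zero.1 this with h | h
    · linarith
    · linarith
  have hD : 0 ≤ ((n1 - l3) * (n2 - l3)) * Real.exp ((x1 + x2 - 2 * x3) * (n1 + n2) / 2)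
      * Wk k l1 l2 l3 n1 n2 := by unfold Wk; positivity
  rw [show FA k x1 x2 x3 l1 l2 l3 n1 n2 = ((n1 - l2) * (l1 - n2) * Erk1 k ((x1 - x2) / 2) (n1 - n2)
        + (l1 - n1) * (l2 - n2) * Erk1 k (-((x1 - x2) / 2)) (n1 - n2)) * (((n1 - l3) * (n2 - l3)) * Real.exp ((x1 + x2 - 2 * x3) * (n1 + n2) / 2)
      * Wk k l1 l2 l3 n1 n2) by rw [FA, neg_div]; ring]
  rw [ENNReal.ofReal_mul' hD, bracket_lint hk (by positivity) (by positivity),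
    ← lintegral_mul_const' _ _ ENNReal.ofReal_ne_top]
  apply setLIntegral_congr_fun measurableSet_Ioo
  intro z hz
  have a1 : 0 < 1 - z := by linarith [hz.2]
  have a2 : 0 < 1 + z := by linarith [hz.1]
  have hI : (n1 - n2)/2 ∈ Iset ((n1+n2)/2-l1) ((n1+n2)/2-l2) ((n1+n2)/2-l3) ((n1-n2)/2*z+(n1+n2)/2-(n1+n2)/2) := by
    rw [mem_Iset_iff]
    refine ⟨⟨h2, h1⟩, ?_⟩
    rw [← image_aff hlt]
    exact ⟨z, hz, rfl⟩
  have hK := Kf_nonneg hI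
  have hR := Rf_pos hI
  simp only [add_sub_cancel_right] at hK hR ⊢
  rw [← ENNReal.ofReal_mul' hD, ← ENNReal.ofReal_mul hK, ← ENNReal.ofReal_mul (by positivity), 
    ← ENNReal.ofReal_mul (by positivity), abs_of_pos hτ]
  congr 1
  have e1 : (n1+n2)/2 + (n1-n2)/2 = n1 := by ring
  have e2 : (n1+n2)/2 - (n1-n2)/2 = n2 := by ring
  have A1 := alg1 (l1 := l1) (l2 := l2) (l3 := l3) (m := (n1+n2)/2) (z := z) hτ.ne'
  have A2 := alg2 (l1 := l1) (l2 := l2) (l3 := l3) (m := (n1+n2)/2) (z := z) hτ.ne'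
  rw [e1, e2] at A1 A2
  rw [A2, Real.mul_rpow (y := (1 - z) * (1 + z)) (by positivity) (by positivity)]
  have E : Real.exp (x1 * ((n1-n2)/2*z+(n1+n2)/2) + x2 * ((n1+n2) - ((n1-n2)/2*z+(n1+n2)/2)) - x3*(n1+n2))
     = Real.exp (z * ((x1-x2)/2*(n1-n2))) * Real.exp ((x1 + x2 - 2 * x3) * (n1 + n2) / 2) := by
    rw [← Real.exp_add]; congr 1; ring
  rw [E, Wk]
  generalize Kf ((n1 + n2) / 2 - l1) ((n1 + n2) / 2 - l2) ((n1 + n2) / 2 - l3) ((n1 - n2) / 2 * z) ((n1 - n2) / 2) = K at A1 ⊢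
  generalize ((l1 - n1) * (l1 - n2) * (n1 - l2) * (l2 - n2) * (n1 - l3) * (n2 - l3)) ^ (k - 1) = w
  generalize ((1 - z) * (1 + z)) ^ (k - 1) = u
  generalize Real.exp (z * ((x1-x2)/2*(n1-n2))) = E1
  generalize Real.exp ((x1 + x2 - 2 * x3) * (n1 + n2) / 2) = E2
  linear_combination (-(cE k * w * u * E1 * E2)) * A1

lemma rep0 {k x1 x2 x3 l1 l2 l3 n1 n2 : ℝ} (h : ¬ (n2 ∈ Set.Ioo l3 l2 ∧ n1 ∈ Set.Ioo l2 l1)) :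
    ∫⁻ ζ, Phi k x1 x2 x3 l1 l2 l3 (n1+n2) ζ ((n1-n2)/2) = 0 := by
  have : ∀ ζ, Phi k x1 x2 x3 l1 l2 l3 (n1+n2) ζ ((n1-n2)/2) = 0 := by
    intro ζ
    unfold Phi
    rw [Set.indicator_of_notMem, zero_mul]
    intro hh
    exact h ((mem_Iset_iff _ _ _ _ _ _).1 hh).1
  simp [this]

lemma LF_eq {k x1 x2 x3 l1 l2 l3 : ℝ} (hk : 0 < k) :
    LF k x1 x2 x3 l1 l2 l3 = ∫⁻ s, ∫⁻ ζ, ∫⁻ τ, Phi k x1 x2 x3 l1 l2 l3 s ζ τ := by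
  have hm := Phi_meas k x1 x2 x3 l1 l2 l3
  have hψ : Measurable (fun p : ℝ × ℝ => ∫⁻ ζ, Phi k x1 x2 x3 l1 l2 l3 p.1 ζ p.2) := hm.lintegral_prod_right'
  have h1 : LF k x1 x2 x3 l1 l2 l3 = ∫⁻ n2, ∫⁻ n1, ∫⁻ ζ, Phi k x1 x2 x3 l1 l2 l3 (n1+n2) ζ ((n1-n2)/2) := by
    unfold LF
    rw [← lintegral_indicator measurableSet_Ioo]
    apply lintegral_congr
    intro n2
    by_cases h2 : n2 ∈ Set.Ioo l3 l2
    · rw [Set.indicator_of_mem h2, ← lintegral_indicator measurableSet_Ioo]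
      apply lintegral_congr
      intro n1
      by_cases h1 : n1 ∈ Set.Ioo l2 l1
      · rw [Set.indicator_of_mem h1, rep hk h2 h1]
      · rw [Set.indicator_of_notMem h1, rep0 (fun h => h1 h.2)]
    · rw [Set.indicator_of_notMem h2]
      simp only [rep0 (fun h : n2 ∈ Set.Ioo l3 l2 ∧ _ => h2 h.1), lintegral_zero]
  have h2 : ∀ n2, ∫⁻ n1, ∫⁻ ζ, Phi k x1 x2 x3 l1 l2 l3 (n1+n2) ζ ((n1-n2)/2)
      = ∫⁻ s, ∫⁻ ζ, Phi k x1 x2 x3 l1 l2 l3 s ζ (s/2-n2) := by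
    intro n2
    rw [← lintegral_sub_right_eq_self _ n2]
    apply lintegral_congr
    intro s
    rw [sub_add_cancel, show (s - n2 - n2)/2 = s/2 - n2 by ring]
  rw [h1]
  simp only [h2]
  rw [lintegral_lintegral_swap]
  · apply lintegral_congr
    intro s
    rw [lintegral_sub_left_eq_self (fun τ => ∫⁻ ζ, Phi k x1 x2 x3 l1 l2 l3 s ζ τ) (s/2), lintegral_lintegral_swap]
    have : Measurable (fun q : ℝ × ℝ => Phi k x1 x2 x3 l1 l2 l3 s q.2 q.1) :=
      hm.comp (g := fun p : (ℝ × ℝ) × ℝ => Phi k x1 x2 x3 l1 l2 l3 p.1.1 p.2 p.1.2) (f := fun q : ℝ × ℝ => ((s, q.1), q.2)) (by fun_prop)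
    exact this.aemeasurable
  · have : Measurable (fun q : ℝ × ℝ => ∫⁻ ζ, Phi k x1 x2 x3 l1 l2 l3 q.2 ζ (q.2/2-q.1)) :=
      hψ.comp (f := fun q : ℝ × ℝ => (q.2, q.2/2-q.1)) (by fun_prop)
    exact this.aemeasurable

lemma Phi_sym {k x1 x2 x3 l1 l2 l3 s ζ : ℝ} (hl : l1 + l2 + l3 = 0) :
    ∫⁻ τ, Phi k x1 x2 x3 l1 l2 l3 s ζ τ = ∫⁻ τ, Phi k (-x3) (-x2) (-x1) (-l3) (-l2) (-l1) ζ s τ := by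
  unfold Phi
  rw [lintegral_mul_const' _ _ ENNReal.ofReal_ne_top, lintegral_mul_const' _ _ ENNReal.ofReal_ne_top,
    lintegral_indicator (measurableSet_Iset _ _ _ _), lintegral_indicator (measurableSet_Iset _ _ _ _)]
  have hφ : Measurable (fun r : ℝ => ENNReal.ofReal (r ^ (k-1))) := (measurable_id.pow_const _).ennreal_ofReal
  have := lint_eq (e1 := s/2-l1) (e2 := s/2-l2) (e3 := s/2-l3) (e4 := ζ-s/2) (h := (s+ζ)/2) (by linarith) hφ
  rw [this]
  rw [show (s+ζ)/2 - (s/2-l3) = ζ/2 - -l3 by ring, show (s+ζ)/2 - (s/2-l2) = ζ/2 - -l2 by ring, show (s+ζ)/2 - (s/2-l1) = ζ/2 - -l1 by ring,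
    show (s+ζ)/2 - (ζ-s/2) = s - ζ/2 by ring, show x1*ζ+x2*(s-ζ)-x3*s = -x3*s+-x2*(ζ-s) - -x1*ζ by ring]

lemma LF_sym {k x1 x2 x3 l1 l2 l3 : ℝ} (hk : 0 < k) (hl : l1 + l2 + l3 = 0) :
    LF k x1 x2 x3 l1 l2 l3 = LF k (-x3) (-x2) (-x1) (-l3) (-l2) (-l1) := by
  rw [LF_eq hk, LF_eq hk]
  simp only [Phi_sym (k := k) (x1 := x1) (x2 := x2) (x3 := x3) hl]
  rw [lintegral_lintegral_swap]
  have hm := Phi_meas k (-x3) (-x2) (-x1) (-l3) (-l2) (-l1)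
  have : Measurable (fun p : (ℝ × ℝ) × ℝ => Phi k (-x3) (-x2) (-x1) (-l3) (-l2) (-l1) p.1.2 p.1.1 p.2) :=
    hm.comp (f := fun p : (ℝ × ℝ) × ℝ => ((p.1.2, p.2), p.1.1)) (by fun_prop)
  exact this.lintegral_prod_right'.aemeasurable

lemma LF_flip (k x1 x2 x3 l1 l2 l3 : ℝ) (hm : Measurable (fun p : ℝ × ℝ => FA k x1 x2 x3 (-l3) (-l2) (-l1) p.1 p.2)) :
    LF k x1 x2 x3 (-l3) (-l2) (-l1) = ∫⁻ n2 in Set.Ioo l3 l2, ∫⁻ n1 in Set.Ioo l2 l1, ENNReal.ofReal (FA k x1 x2 x3 (-l3) (-l2) (-l1) (-n2) (-n1)) := by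
  unfold LF
  have key : ∀ (a b : ℝ) (f : ℝ → ENNReal), ∫⁻ x in Set.Ioo (-b) (-a), f x = ∫⁻ x in Set.Ioo a b, f (-x) := by
    intro a b f
    rw [← lintegral_indicator measurableSet_Ioo, ← lintegral_indicator measurableSet_Ioo,
      ← lintegral_neg_eq_self]
    apply lintegral_congr
    intro x
    simp only [Set.indicator, Set.mem_Ioo, neg_lt_neg_iff, and_comm]
  rw [key]
  simp only [key]
  rw [lintegral_lintegral_swap]
  have : Measurable (fun p : ℝ × ℝ => ENNReal.ofReal (FA k x1 x2 x3 (-l3) (-l2) (-l1) (-p.2) (-p.1))) :=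
    (hm.comp (f := fun p : ℝ × ℝ => (-p.2, -p.1)) (by fun_prop)).ennreal_ofReal
  exact this.aemeasurable

lemma continuous_Iz {p q : ℝ} (hp : 0 < p) (hq : 0 < q) : Continuous (Iz p q) := by
  rw [continuous_iff_continuousAt]
  intro y0
  unfold Iz
  apply intervalIntegral.continuousAt_of_dominated_interval
    (bound := fun z => Real.exp (|y0| + 1) * ((1 - z) ^ (p - 1) * (1 + z) ^ (q - 1)))
  · filter_upwards with y
    rw [Set.uIoc_of_le (by norm_num)]
    exact (ii_full hp hq).1.aestronglyMeasurable
  · filter_upwards [Metric.ball_mem_nhds y0 one_pos] with y hy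
    filter_upwards with z hz
    rw [Set.uIoc_of_le (by norm_num)] at hz
    have h1 : 0 ≤ 1 - z := by linarith [hz.2]
    have h2 : 0 ≤ 1 + z := by linarith [hz.1]
    rw [Real.norm_of_nonneg (by positivity), mul_assoc]
    gcongr
    have a : |y| ≤ |y0| + 1 := by
      have : |y - y0| < 1 := hy
      have := abs_sub_abs_le_abs_sub y y0
      linarith
    have b : |z| ≤ 1 := abs_le.2 ⟨by linarith, by linarith⟩
    calc z * y ≤ |z * y| := le_abs_self _
      _ = |z| * |y| := abs_mul _ _
      _ ≤ 1 * |y| := by gcongr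
      _ ≤ _ := by linarith
  · have := (ii_full (y := 0) hp hq).const_mul (Real.exp (|y0| + 1))
    simpa using this
  · filter_upwards with z _
    fun_prop

lemma continuous_Erk1 {k : ℝ} (hk : 0 < k) (x : ℝ) : Continuous (fun v => Erk1 k x v) := by
  simp only [Erk1_pos_eq]
  have := continuous_Iz hk (by linarith : 0 < k + 1)
  fun_prop

lemma ii_beta {k l1 l2 : ℝ} (hk : 0 < k) (h : l2 < l1) :
    IntervalIntegrable (fun n : ℝ => (l1 - n) ^ (k - 1) * (n - l2) ^ (k - 1)) volume l2 l1 := by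
  apply IntervalIntegrable.trans (b := (l1+l2)/2)
  · have h1 : IntervalIntegrable (fun n : ℝ => (n - l2) ^ (k - 1)) volume l2 ((l1+l2)/2) := by
      have := (intervalIntegral.intervalIntegrable_rpow' (a := l2 - l2) (b := (l1+l2)/2 - l2) (r := k - 1) (by linarith)).comp_sub_right l2
      simpa using this
    apply h1.continuousOn_mul
    apply ContinuousOn.rpow_const (by fun_prop)
    intro z hz
    rw [Set.uIcc_of_le (by linarith)] at hz
    left; linarith [hz.2]
  · have h1 : IntervalIntegrable (fun n : ℝ => (l1 - n) ^ (k - 1)) volume ((l1+l2)/2) l1 := by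
      have := (intervalIntegral.intervalIntegrable_rpow' (a := l1 - (l1+l2)/2) (b := l1 - l1) (r := k - 1) (by linarith)).comp_sub_left l1
      simpa using this
    apply h1.mul_continuousOn
    apply ContinuousOn.rpow_const (by fun_prop)
    intro z hz
    rw [Set.uIcc_of_le (by linarith)] at hz
    left; linarith [hz.1]

lemma inner_fin {k l1 l2 : ℝ} (hk : 0 < k) (h : l2 < l1) {f g : ℝ → ℝ} (hg : ContinuousOn g (Set.Icc l2 l1))
    (hf : ∀ n ∈ Set.Ioo l2 l1, f n = g n * ((l1 - n) ^ (k - 1) * (n - l2) ^ (k - 1))) :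
    ∫⁻ n in Set.Ioo l2 l1, ENNReal.ofReal (f n) < ⊤ := by
  have h1 := (ii_beta hk h).continuousOn_mul (g := g) (by rwa [Set.uIcc_of_le h.le])
  rw [intervalIntegrable_iff_integrableOn_Ioc_of_le h.le, integrableOn_Ioc_iff_integrableOn_Ioo] at h1
  rw [setLIntegral_congr_fun measurableSet_Ioo (fun n hn => by rw [hf n hn])]
  exact h1.lintegral_lt_top

lemma toReal_iter {l1 l2 l3 : ℝ} (h12 : l2 < l1) (h23 : l3 < l2) {f : ℝ → ℝ → ℝ}
    (hm : Measurable (fun p : ℝ × ℝ => f p.1 p.2))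
    (h0 : ∀ n1 n2, n2 ∈ Set.Ioo l3 l2 → n1 ∈ Set.Ioo l2 l1 → 0 ≤ f n1 n2)
    (hfin : ∀ n2 ∈ Set.Ioo l3 l2, ∫⁻ n1 in Set.Ioo l2 l1, ENNReal.ofReal (f n1 n2) < ⊤) :
    ∫ n2 in l3..l2, ∫ n1 in l2..l1, f n1 n2
      = (∫⁻ n2 in Set.Ioo l3 l2, ∫⁻ n1 in Set.Ioo l2 l1, ENNReal.ofReal (f n1 n2)).toReal := by
  rw [intervalIntegral.integral_of_le h23.le, integral_Ioc_eq_integral_Ioo]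
  have hm2 : Measurable (fun p : ℝ × ℝ => ENNReal.ofReal (f p.2 p.1)) :=
    (hm.comp (f := fun p : ℝ × ℝ => (p.2, p.1)) (by fun_prop)).ennreal_ofReal
  have h1 : ∀ n2 ∈ Set.Ioo l3 l2, ∫ n1 in l2..l1, f n1 n2 = (∫⁻ n1 in Set.Ioo l2 l1, ENNReal.ofReal (f n1 n2)).toReal := by
    intro n2 h2
    rw [intervalIntegral.integral_of_le h12.le, integral_Ioc_eq_integral_Ioo, integral_eq_lintegral_of_nonneg_ae]
    · filter_upwards [ae_restrict_mem measurableSet_Ioo] with n1 h1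
      exact h0 n1 n2 h2 h1
    · exact (hm.comp (f := fun n1 : ℝ => (n1, n2)) (by fun_prop)).aestronglyMeasurable
  rw [setIntegral_congr_fun measurableSet_Ioo h1, integral_toReal]
  · exact hm2.lintegral_prod_right'.aemeasurable
  · filter_upwards [ae_restrict_mem measurableSet_Ioo] with n2 h2
    exact hfin n2 h2

noncomputable def GA (k x1 x2 x3 l1 l2 l3 n1 n2 : ℝ) : ℝ :=
  (n1 - n2) * ((l2 - l3) - (x2 - x3) * (n1 - l2) * (n2 - l3))
            / (1 - (x2 - x3) * (n1 - n2)) ^ (k + 1)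
          * ((l1 - n1) * (l1 - n2)) * Real.exp ((x3 - x1) * n1 + (x2 - x1) * n2)
          * Wk k l1 l2 l3 n1 n2

lemma FA_meas (k x1 x2 x3 l1 l2 l3 : ℝ) : Measurable (fun p : ℝ × ℝ => FA k x1 x2 x3 l1 l2 l3 p.1 p.2) := by
  unfold FA Wk
  have a := measurable_Erk1 k ((x1 - x2)/2)
  have b := measurable_Erk1 k (-(x1 - x2)/2)
  fun_prop

lemma GA_meas (k x1 x2 x3 l1 l2 l3 : ℝ) : Measurable (fun p : ℝ × ℝ => GA k x1 x2 x3 l1 l2 l3 p.1 p.2) := by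
  unfold GA Wk
  fun_prop

lemma Wk_split {k l1 l2 l3 n1 n2 : ℝ} (h2 : n2 ∈ Set.Ioo l3 l2) (h1 : n1 ∈ Set.Ioo l2 l1) :
    Wk k l1 l2 l3 n1 n2 = ((l1 - n2) * (l2 - n2) * (n1 - l3) * (n2 - l3)) ^ (k - 1) * ((l1 - n1) ^ (k - 1) * (n1 - l2) ^ (k - 1)) := by
  have p1 : 0 < n1 - l2 := by linarith [h1.1, h2.2]
  have p2 : 0 < l1 - n2 := by linarith [h1.1, h1.2, h2.2]
  have p3 : 0 < l1 - n1 := by linarith [h1.2]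
  have p4 : 0 < l2 - n2 := by linarith [h2.2]
  have p5 : 0 < n1 - l3 := by linarith [h2.1, h1.1, h2.2]
  have p6 : 0 < n2 - l3 := by linarith [h2.1]
  rw [Wk, ← Real.mul_rpow p3.le p1.le, ← Real.mul_rpow (by positivity) (by positivity)]
  congr 1
  ring

lemma cont_w {k l1 l2 l3 n2 : ℝ} (h2 : n2 ∈ Set.Ioo l3 l2) (h12 : l2 < l1) :
    ContinuousOn (fun n1 => ((l1 - n2) * (l2 - n2) * (n1 - l3) * (n2 - l3)) ^ (k - 1)) (Set.Icc l2 l1) := by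
  apply ContinuousOn.rpow_const (by fun_prop)
  intro n1 h1
  left
  have p2 : 0 < l1 - n2 := by linarith [h2.2]
  have p4 : 0 < l2 - n2 := by linarith [h2.2]
  have p5 : 0 < n1 - l3 := by linarith [h2.1, h1.1, h2.2]
  have p6 : 0 < n2 - l3 := by linarith [h2.1]
  positivity

lemma FA_fin {k x1 x2 x3 l1 l2 l3 n2 : ℝ} (hk : 0 < k) (h12 : l2 < l1) (h2 : n2 ∈ Set.Ioo l3 l2) :
    ∫⁻ n1 in Set.Ioo l2 l1, ENNReal.ofReal (FA k x1 x2 x3 l1 l2 l3 n1 n2) < ⊤ := by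
  refine inner_fin (k := k) (g := fun n1 => (((n1 - l2) * (l1 - n2) * Erk1 k ((x1 - x2) / 2) (n1 - n2)
        + (l1 - n1) * (l2 - n2) * Erk1 k (-(x1 - x2) / 2) (n1 - n2))
      * ((n1 - l3) * (n2 - l3)) * Real.exp ((x1 + x2 - 2 * x3) * (n1 + n2) / 2)) * ((l1 - n2) * (l2 - n2) * (n1 - l3) * (n2 - l3)) ^ (k - 1)) hk h12 ?_ ?_
  · apply ContinuousOn.mul _ (cont_w h2 h12)
    apply Continuous.continuousOn
    have a := continuous_Erk1 hk ((x1 - x2)/2)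
    have b := continuous_Erk1 hk (-(x1 - x2)/2)
    fun_prop
  · intro n1 h1
    rw [FA, Wk_split h2 h1]
    ring

lemma GA_fin {k x1 x2 x3 l1 l2 l3 n2 : ℝ} (hk : 0 < k) (h12 : l2 < l1) (hx : x2 ≤ x3) (h2 : n2 ∈ Set.Ioo l3 l2) :
    ∫⁻ n1 in Set.Ioo l2 l1, ENNReal.ofReal (GA k x1 x2 x3 l1 l2 l3 n1 n2) < ⊤ := by
  refine inner_fin (k := k) (g := fun n1 => ((n1 - n2) * ((l2 - l3) - (x2 - x3) * (n1 - l2) * (n2 - l3))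
            / (1 - (x2 - x3) * (n1 - n2)) ^ (k + 1)
          * ((l1 - n1) * (l1 - n2)) * Real.exp ((x3 - x1) * n1 + (x2 - x1) * n2)) * ((l1 - n2) * (l2 - n2) * (n1 - l3) * (n2 - l3)) ^ (k - 1)) hk h12 ?_ ?_
  · have hpos : ∀ n1 ∈ Set.Icc l2 l1, 0 < 1 - (x2 - x3) * (n1 - n2) := by
      intro n1 h1
      have : 0 ≤ (x3 - x2) * (n1 - n2) := mul_nonneg (by linarith) (by linarith [h1.1, h2.2])
      linarith
    apply ContinuousOn.mul _ (cont_w h2 h12)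
    refine ContinuousOn.mul (ContinuousOn.mul (ContinuousOn.div (by fun_prop) ?_ ?_) (by fun_prop)) (by fun_prop)
    · apply ContinuousOn.rpow_const (by fun_prop)
      intro n1 h1; left; exact (hpos n1 h1).ne'
    · intro n1 h1
      have := hpos n1 h1
      positivity
  · intro n1 h1
    rw [GA, Wk_split h2 h1]
    ring

lemma Erk1_est {k : ℝ} (hk : 0 < k) : ∃ c C : ℝ, 0 < c ∧ 0 < C ∧ ∀ b v, 0 ≤ b → 0 ≤ v →
    (c * (Real.exp (b*v/2) / (1 + b*v)^k) ≤ Erk1 k (b/2) v ∧ Erk1 k (b/2) v ≤ C * (Real.exp (b*v/2) / (1 + b*v)^k)) ∧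
    (c * (Real.exp (b*v/2) / (1 + b*v)^(k+1)) ≤ Erk1 k (-(b/2)) v ∧ Erk1 k (-(b/2)) v ≤ C * (Real.exp (b*v/2) / (1 + b*v)^(k+1))) := by
  have hk1 : 0 < k + 1 := by linarith
  obtain ⟨c1, c10, H1⟩ := Iz_lower hk hk1
  obtain ⟨c2, c20, H2⟩ := Iz_upper hk hk1
  obtain ⟨c3, c30, H3⟩ := Iz_lower hk1 hk
  obtain ⟨c4, c40, H4⟩ := Iz_upper hk1 hk
  have hc := cE_pos hk
  refine ⟨cE k * min c1 c3, cE k * max c2 c4, by positivity, by positivity, fun b v hb hv => ?_⟩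
  have hy : 0 ≤ b / 2 * v := by positivity
  have h1 := H1 _ hy
  have h2 := H2 _ hy
  have h3 := H3 _ hy
  have h4 := H4 _ hy
  rw [Erk1_pos_eq, Erk1_neg_eq]
  rw [show 1 + 2 * (b/2*v) = 1 + b*v by ring] at h1 h2 h3 h4
  rw [show b*v/2 = b/2*v by ring]
  have hp : 0 ≤ 1 + b*v := by positivity
  simp only [mul_assoc (cE k)]
  refine ⟨⟨?_, ?_⟩, ?_, ?_⟩
  · gcongr; refine le_trans ?_ h1; gcongr; exact min_le_left _ _
  · gcongr; refine h2.trans ?_; gcongr; exact le_max_left _ _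
  · gcongr; refine le_trans ?_ h3; gcongr; exact min_le_right _ _
  · gcongr; refine h4.trans ?_; gcongr; exact le_max_right _ _

lemma pointwise {k : ℝ} (hk : 0 < k) : ∃ c C : ℝ, 0 < c ∧ 0 < C ∧ ∀ l1 l2 l3 x1 x2 x3 n1 n2 : ℝ, x2 ≤ x3 →
    n2 ∈ Set.Ioo l3 l2 → n1 ∈ Set.Ioo l2 l1 → 
    0 ≤ GA k x1 x2 x3 l1 l2 l3 n1 n2 ∧
    c * GA k x1 x2 x3 l1 l2 l3 n1 n2 ≤ FA k (-x3) (-x2) (-x1) (-l3) (-l2) (-l1) (-n2) (-n1) ∧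
    FA k (-x3) (-x2) (-x1) (-l3) (-l2) (-l1) (-n2) (-n1) ≤ C * GA k x1 x2 x3 l1 l2 l3 n1 n2 := by
  obtain ⟨c, C, hc, hC, H⟩ := Erk1_est hk
  refine ⟨c, C, hc, hC, fun l1 l2 l3 x1 x2 x3 n1 n2 hx h2 h1 => ?_⟩
  have p1 : 0 < n1 - l2 := by linarith [h1.1, h2.2]
  have p2 : 0 < l1 - n2 := by linarith [h1.1, h1.2, h2.2]
  have p3 : 0 < l1 - n1 := by linarith [h1.2]
  have p4 : 0 < l2 - n2 := by linarith [h2.2]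
  have p5 : 0 < n1 - l3 := by linarith [h2.1, h1.1, h2.2]
  have p6 : 0 < n2 - l3 := by linarith [h2.1]
  have hv : 0 < n1 - n2 := by linarith
  have hb : 0 ≤ x3 - x2 := by linarith
  obtain ⟨⟨H1, H2⟩, H3, H4⟩ := H (x3 - x2) (n1 - n2) hb hv.le
  have hq : 0 < 1 + (x3 - x2) * (n1 - n2) := by positivity
  set q := 1 + (x3 - x2) * (n1 - n2) with hqd
  set D : ℝ := (l1 - n1) * (l1 - n2) * Real.exp ((x2 + x3 - 2 * x1) * (n1 + n2) / 2) * Wk k l1 l2 l3 n1 n2 with hD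
  have hD0 : 0 ≤ D := by rw [hD, Wk]; positivity
  have hF : FA k (-x3) (-x2) (-x1) (-l3) (-l2) (-l1) (-n2) (-n1) =
     ((l2 - n2) * (n1 - l3) * Erk1 k (-((x3 - x2)/2)) (n1 - n2) + (n2 - l3) * (n1 - l2) * Erk1 k ((x3 - x2)/2) (n1 - n2)) * D := by
    have hW : Wk k (-l3) (-l2) (-l1) (-n2) (-n1) = Wk k l1 l2 l3 n1 n2 := by
      unfold Wk; congr 1; ring
    rw [FA, hW, hD, show (-x3 - -x2)/2 = -((x3-x2)/2) by ring, show -(-x3 - -x2)/2 = (x3-x2)/2 by ring,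
      show -n2 - -n1 = n1 - n2 by ring, show (-x3 + -x2 - 2 * -x1) * (-n2 + -n1) / 2 = (x2 + x3 - 2 * x1) * (n1 + n2) / 2 by ring]
    ring
  have hG : GA k x1 x2 x3 l1 l2 l3 n1 n2 =
     ((l2 - n2) * (n1 - l3) * (Real.exp ((x3-x2)*(n1-n2)/2) / q^(k+1)) + (n2 - l3) * (n1 - l2) * (Real.exp ((x3-x2)*(n1-n2)/2) / q^k)) * D := by
    rw [GA, hD, show 1 - (x2 - x3) * (n1 - n2) = q by rw [hqd]; ring, Real.rpow_add_one hq.ne',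
      show (x3 - x1) * n1 + (x2 - x1) * n2 = (x3-x2)*(n1-n2)/2 + (x2 + x3 - 2 * x1) * (n1 + n2) / 2 by ring, Real.exp_add]
    have hqk : 0 < q ^ k := by positivity
    generalize Real.exp ((x3-x2)*(n1-n2)/2) = E1
    generalize Real.exp ((x2 + x3 - 2 * x1) * (n1 + n2) / 2) = E2
    generalize Wk k l1 l2 l3 n1 n2 = w
    generalize q ^ k = u at hqk
    have hn := hq.ne'
    field_simp
    rw [hqd]
    ring
  have hcd : 0 ≤ (l2 - n2) * (n1 - l3) := by positivity
  have hcd' : 0 ≤ (n2 - l3) * (n1 - l2) := by positivity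
  rw [hF, hG]
  refine ⟨by positivity, ?_, ?_⟩
  · rw [← mul_assoc]
    apply mul_le_mul_of_nonneg_right _ hD0
    have := mul_le_mul_of_nonneg_left H3 hcd
    have := mul_le_mul_of_nonneg_left H1 hcd'
    linarith
  · rw [← mul_assoc C]
    apply mul_le_mul_of_nonneg_right _ hD0
    have := mul_le_mul_of_nonneg_left H4 hcd
    have := mul_le_mul_of_nonneg_left H2 hcd'
    linarith

lemma FA_nonneg {k x1 x2 x3 l1 l2 l3 n1 n2 : ℝ} (hk : 0 < k) (h2 : n2 ∈ Set.Ioo l3 l2) (h1 : n1 ∈ Set.Ioo l2 l1) :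
    0 ≤ FA k x1 x2 x3 l1 l2 l3 n1 n2 := by
  have p1 : 0 < n1 - l2 := by linarith [h1.1, h2.2]
  have p2 : 0 < l1 - n2 := by linarith [h1.1, h1.2, h2.2]
  have p3 : 0 < l1 - n1 := by linarith [h1.2]
  have p4 : 0 < l2 - n2 := by linarith [h2.2]
  have p5 : 0 < n1 - l3 := by linarith [h2.1, h1.1, h2.2]
  have p6 : 0 < n2 - l3 := by linarith [h2.1]
  have hE : ∀ x v, 0 ≤ Erk1 k x v := by
    intro x v
    rw [Erk1_pos_eq]
    apply mul_nonneg (cE_pos hk).le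
    apply intervalIntegral.integral_nonneg (by norm_num)
    intro z hz
    have h1 : 0 ≤ 1 - z := by linarith [hz.2]
    have h2 : 0 ≤ 1 + z := by linarith [hz.1]
    positivity
  have e1 := hE ((x1-x2)/2) (n1-n2)
  have e2 := hE (-(x1-x2)/2) (n1-n2)
  unfold FA Wk
  positivity

lemma main_est {k : ℝ} (hk : 0 < k) : ∃ c C : ℝ, 0 < c ∧ 0 < C ∧ ∀ l1 l2 l3 x1 x2 x3 : ℝ, l1 + l2 + l3 = 0 → l2 < l1 → l3 < l2 → x2 ≤ x3 →
    0 ≤ (∫ n2 in l3..l2, ∫ n1 in l2..l1, GA k x1 x2 x3 l1 l2 l3 n1 n2) ∧ 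
    c * (∫ n2 in l3..l2, ∫ n1 in l2..l1, GA k x1 x2 x3 l1 l2 l3 n1 n2) ≤ ∫ n2 in l3..l2, ∫ n1 in l2..l1, FA k x1 x2 x3 l1 l2 l3 n1 n2 ∧
    ∫ n2 in l3..l2, ∫ n1 in l2..l1, FA k x1 x2 x3 l1 l2 l3 n1 n2 ≤ C * (∫ n2 in l3..l2, ∫ n1 in l2..l1, GA k x1 x2 x3 l1 l2 l3 n1 n2) := by
  obtain ⟨c, C, hc, hC, H⟩ := pointwise hk
  refine ⟨c, C, hc, hC, fun l1 l2 l3 x1 x2 x3 hl h12 h23 hx => ?_⟩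
  rw [toReal_iter h12 h23 (FA_meas k x1 x2 x3 l1 l2 l3) (fun n1 n2 h2 h1 => FA_nonneg hk h2 h1) (fun n2 h2 => FA_fin hk h12 h2),
    toReal_iter h12 h23 (GA_meas k x1 x2 x3 l1 l2 l3) (fun n1 n2 h2 h1 => (H l1 l2 l3 x1 x2 x3 n1 n2 hx h2 h1).1) (fun n2 h2 => GA_fin hk h12 hx h2)]
  set LG := ∫⁻ n2 in Set.Ioo l3 l2, ∫⁻ n1 in Set.Ioo l2 l1, ENNReal.ofReal (GA k x1 x2 x3 l1 l2 l3 n1 n2) with hLG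
  have hLF : ∫⁻ n2 in Set.Ioo l3 l2, ∫⁻ n1 in Set.Ioo l2 l1, ENNReal.ofReal (FA k x1 x2 x3 l1 l2 l3 n1 n2) = 
     ∫⁻ n2 in Set.Ioo l3 l2, ∫⁻ n1 in Set.Ioo l2 l1, ENNReal.ofReal (FA k (-x3) (-x2) (-x1) (-l3) (-l2) (-l1) (-n2) (-n1)) := by
    rw [← LF_flip _ _ _ _ _ _ _ (FA_meas _ _ _ _ _ _ _), ← LF_sym hk hl, LF]
  rw [hLF]
  set L := ∫⁻ n2 in Set.Ioo l3 l2, ∫⁻ n1 in Set.Ioo l2 l1, ENNReal.ofReal (FA k (-x3) (-x2) (-x1) (-l3) (-l2) (-l1) (-n2) (-n1)) with hL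
  have hmul : ∀ a : ℝ, ENNReal.ofReal a * LG = ∫⁻ n2 in Set.Ioo l3 l2, ∫⁻ n1 in Set.Ioo l2 l1, ENNReal.ofReal a * ENNReal.ofReal (GA k x1 x2 x3 l1 l2 l3 n1 n2) := by
    intro a
    rw [hLG, ← lintegral_const_mul' _ _ ENNReal.ofReal_ne_top]
    congr 1
    ext n2
    rw [← lintegral_const_mul' _ _ ENNReal.ofReal_ne_top]
  have u1 : ENNReal.ofReal c * LG ≤ L := by
    rw [hmul]
    apply setLIntegral_mono' measurableSet_Ioo
    intro n2 h2
    apply setLIntegral_mono' measurableSet_Ioo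
    intro n1 h1
    rw [← ENNReal.ofReal_mul hc.le]
    exact ENNReal.ofReal_le_ofReal (H l1 l2 l3 x1 x2 x3 n1 n2 hx h2 h1).2.1
  have u2 : L ≤ ENNReal.ofReal C * LG := by
    rw [hmul]
    apply setLIntegral_mono' measurableSet_Ioo
    intro n2 h2
    apply setLIntegral_mono' measurableSet_Ioo
    intro n1 h1
    rw [← ENNReal.ofReal_mul hC.le]
    exact ENNReal.ofReal_le_ofReal (H l1 l2 l3 x1 x2 x3 n1 n2 hx h2 h1).2.2
  refine ⟨ENNReal.toReal_nonneg, ?_⟩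
  by_cases hT : LG = ⊤
  · have : L = ⊤ := by
      rw [hT, ENNReal.mul_top (by simpa using hc)] at u1
      exact top_le_iff.1 u1
    rw [hT, this]; simp
  · have hT2 : L ≠ ⊤ := ne_top_of_le_ne_top (ENNReal.mul_ne_top ENNReal.ofReal_ne_top hT) u2
    have v1 := ENNReal.toReal_mono hT2 u1
    have v2 := ENNReal.toReal_mono (ENNReal.mul_ne_top ENNReal.ofReal_ne_top hT) u2
    rw [ENNReal.toReal_mul, ENNReal.toReal_ofReal hc.le] at v1
    rw [ENNReal.toReal_mul, ENNReal.toReal_ofReal hC.le] at v2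
    exact ⟨v1, v2⟩

/-- Lemma 5.x: two-sided estimate for `V(λ)^{2k} E_k(X,λ)`. -/
theorem lemma_beta_minus (k : ℝ) (hk : 0 < k) :
    ∃ C : ℝ, 0 < C ∧ ∀ l1 l2 l3 x1 x2 x3 : ℝ,
      l1 + l2 + l3 = 0 →
      l2 < l1 →
      l3 < l2 →
      x1 + x2 + x3 = 0 →
      x2 ≤ x3 →
      (C⁻¹ * (∫ n2 in l3..l2, ∫ n1 in l2..l1,
          (n1 - n2) * ((l2 - l3) - (x2 - x3) * (n1 - l2) * (n2 - l3))
            / (1 - (x2 - x3) * (n1 - n2)) ^ (k + 1)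
          * ((l1 - n1) * (l1 - n2)) * Real.exp ((x3 - x1) * n1 + (x2 - x1) * n2)
          * Wk k l1 l2 l3 n1 n2)
        ≤ Vlam l1 l2 l3 ^ (2 * k) * EkA2 k x1 x2 x3 l1 l2 l3 ∧
      Vlam l1 l2 l3 ^ (2 * k) * EkA2 k x1 x2 x3 l1 l2 l3
        ≤ C * (∫ n2 in l3..l2, ∫ n1 in l2..l1,
          (n1 - n2) * ((l2 - l3) - (x2 - x3) * (n1 - l2) * (n2 - l3))
            / (1 - (x2 - x3) * (n1 - n2)) ^ (k + 1)
          * ((l1 - n1) * (l1 - n2)) * Real.exp ((x3 - x1) * n1 + (x2 - x1) * n2)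
          * Wk k l1 l2 l3 n1 n2)) := by
  obtain ⟨c, C, hc, hC, H⟩ := main_est hk
  have hN : 0 < 3 * Real.Gamma (3 * k) / Real.Gamma k ^ 2 := by
    have h1 := Real.Gamma_pos_of_pos hk
    have h2 := Real.Gamma_pos_of_pos (s := 3 * k) (by linarith)
    positivity
  set N : ℝ := 3 * Real.Gamma (3 * k) / Real.Gamma k ^ 2 with hNd
  refine ⟨max (N * C) (N * c)⁻¹, by positivity, fun l1 l2 l3 x1 x2 x3 hl h12 h23 hxs hx => ?_⟩
  obtain ⟨h0, h1, h2⟩ := H l1 l2 l3 x1 x2 x3 hl h12 h23 hx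
  have hE : Vlam l1 l2 l3 ^ (2 * k) * EkA2 k x1 x2 x3 l1 l2 l3
      = N * ∫ n2 in l3..l2, ∫ n1 in l2..l1, FA k x1 x2 x3 l1 l2 l3 n1 n2 := by
    have hV : 0 < Vlam l1 l2 l3 := by
      have a1 : 0 < l1 - l2 := by linarith
      have a2 : 0 < l1 - l3 := by linarith
      have a3 : 0 < l2 - l3 := by linarith
      unfold Vlam; positivity
    have hV2 : Vlam l1 l2 l3 ^ (2 * k) ≠ 0 := (Real.rpow_pos_of_pos hV _).ne'
    have hG := (Real.Gamma_pos_of_pos hk).ne'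
    unfold EkA2 FA
    rw [hNd, ← mul_assoc]
    congr 1
    field_simp
  rw [hE]
  change _ * (∫ n2 in l3..l2, ∫ n1 in l2..l1, GA k x1 x2 x3 l1 l2 l3 n1 n2) ≤ _ ∧
    _ ≤ _ * (∫ n2 in l3..l2, ∫ n1 in l2..l1, GA k x1 x2 x3 l1 l2 l3 n1 n2)
  generalize (∫ n2 in l3..l2, ∫ n1 in l2..l1, GA k x1 x2 x3 l1 l2 l3 n1 n2) = G at h0 h1 h2 ⊢
  generalize (∫ n2 in l3..l2, ∫ n1 in l2..l1, FA k x1 x2 x3 l1 l2 l3 n1 n2) = F at h1 h2 ⊢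
  constructor
  · have : (max (N * C) (N * c)⁻¹)⁻¹ ≤ N * c := by
      apply inv_le_of_inv_le₀ (by positivity)
      exact le_max_right _ _
    calc _ ≤ N * c * G := by gcongr
      _ = N * (c * G) := by ring
      _ ≤ N * F := by gcongr
  · calc N * F ≤ N * (C * G) := by gcongr
      _ = N * C * G := by ring
      _ ≤ _ := by gcongr; exact le_max_left _ _
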